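/- arXiv:1801.02979 — 8 statements merged into one kernel-verified Lean document; each statement's English description precedes it below -/
import Mathlib

section
/- Let 1 ≤ k ≤ L be integers, r = (r_j)_{j≥0} a nonnegative real sequence summing to 1, and u_m = ∑_{i=m}^{∞} r_i. Then for every j ≥ 0, L!·ζ̄(j,r) = f(u_j) − f(u_{j+1}). -/
open Finset

/-- The polynomial `f ≡ f^{(L,k)}` from the paper:
`f(x) = ∑_{i=1}^{k} C(L, L−k+i)·C(L−k+i−2, i−1)·(−1)^{i−1}·x^{L−k+i}`. -/
noncomputable def fLk (L k : ℕ) (x : ℝ) : ℝ :=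
  ∑ i ∈ Finset.Icc 1 k,
    (L.choose (L - k + i) : ℝ) * ((L - k + i - 2).choose (i - 1) : ℝ) *
      (-1 : ℝ) ^ (i - 1) * x ^ (L - k + i)

/-- `ζ̄(j,r)` from the paper. -/
noncomputable def zetaBar (L k : ℕ) (r : ℕ → ℝ) (j : ℕ) : ℝ :=
  ∑ i1 ∈ Finset.range k,
    (∑ m ∈ Finset.range j, r m) ^ i1 / (Nat.factorial i1 : ℝ) *
      ∑ i2 ∈ Finset.Icc 1 (L - i1),
        (min i2 (k - i1) : ℝ) * (r j ^ i2 / (Nat.factorial i2 : ℝ)) *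
          ((∑' m : ℕ, r (j + 1 + m)) ^ (L - i1 - i2) / (Nat.factorial (L - i1 - i2) : ℝ))

/-- `E[(k - Bin(L, y))^+]` with `y + x = 1`. -/
noncomputable def gLk (L k : ℕ) (y x : ℝ) : ℝ :=
  ∑ n ∈ Finset.range (L + 1), ((k - n : ℕ) : ℝ) * ((L.choose n : ℝ) * y ^ n * x ^ (L - n))

/-- signed coefficient -/
noncomputable def dCoef (n m : ℕ) : ℝ :=
  if m + 1 ≤ n then (-1 : ℝ) ^ (n - 1 - m) * ((n - 2).choose (n - 1 - m) : ℝ) else 0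

lemma fLk_eq (m k : ℕ) (x : ℝ) :
    fLk (m + k) k x
      = ∑ n ∈ Finset.range (m + k + 1), ((m + k).choose n : ℝ) * dCoef n m * x ^ n := by
  have e : m + k + 1 = (m + 1) + k := by omega
  rw [e, Finset.sum_range_add]
  rw [Finset.sum_eq_zero (s := Finset.range (m + 1))]
  · unfold fLk
    rw [zero_add, Finset.range_eq_Ico, Finset.sum_Ico_eq_sum_range, ← Finset.Ico_succ_right_eq_Icc,
      Finset.sum_Ico_eq_sum_range]
    refine Finset.sum_congr (by simp) fun i _ => ?_
    have h1 : m + k - k + (1 + i) = m + 1 + (0 + i) := by omega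
    have h2 : m + 1 + (0 + i) - 1 - m = 1 + i - 1 := by omega
    rw [h1, dCoef, if_pos (by omega), h2]
    ring
  · intro n hn
    rw [Finset.mem_range] at hn
    rw [dCoef, if_neg (by omega)]
    simp

lemma dCoef_diff (n m : ℕ) :
    dCoef n m - 2 * dCoef n (m + 1) + dCoef n (m + 2)
      = if m + 1 ≤ n then (-1 : ℝ) ^ (n - (m + 1)) * (n.choose (m + 1) : ℝ) else 0 := by
  unfold dCoef
  by_cases h : m + 1 ≤ n
  · obtain ⟨t, rfl⟩ := Nat.exists_eq_add_of_le h
    have hc : (m + 1 + t).choose (m + 1) = (m + 1 + t).choose t := by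
      rw [Nat.choose_symm_add]
    rw [hc]
    rcases t with _ | _ | t
    · simp
    · rw [if_pos (by omega), if_pos (by omega), if_neg (by omega), if_pos (by omega),
        show m + 1 + (0 + 1) - 1 - m = 1 by omega, show m + 1 + (0 + 1) - 2 = m by omega,
        show m + 1 + (0 + 1) - 1 - (m + 1) = 0 by omega,
        show m + 1 + (0 + 1) - (m + 1) = 1 by omega, show 0 + 1 = 1 from rfl,
        Nat.choose_one_right, Nat.choose_one_right, Nat.choose_zero_right]
      push_cast
      ring
    · rw [if_pos (by omega), if_pos (by omega), if_pos (by omega), if_pos (by omega)]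
      have h1 : m + 1 + (t + 1 + 1) - 1 - m = t + 2 := by omega
      have h2 : m + 1 + (t + 1 + 1) - 1 - (m + 1) = t + 1 := by omega
      have h3 : m + 1 + (t + 1 + 1) - 1 - (m + 2) = t := by omega
      have h4 : m + 1 + (t + 1 + 1) - 2 = m + t + 1 := by omega
      have h5 : m + 1 + (t + 1 + 1) - (m + 1) = t + 2 := by omega
      have h6 : m + 1 + (t + 1 + 1) = (m + t + 1) + 1 + 1 := by omega
      rw [h1, h2, h3, h4, h5, h6, Nat.choose_succ_succ (m + t + 1 + 1),
        Nat.choose_succ_succ (m + t + 1) t, Nat.choose_succ_succ (m + t + 1) (t + 1)]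
      push_cast
      ring
  · rw [if_neg h, if_neg (by omega), if_neg (by omega), if_neg (by omega)]
    ring

lemma binom_part (m p : ℕ) (x : ℝ) :
    ∑ n ∈ Finset.range (m + p + 1), ((m + p).choose n : ℝ) *
      (if m ≤ n then (-1 : ℝ) ^ (n - m) * (n.choose m : ℝ) else 0) * x ^ n
      = ((m + p).choose m : ℝ) * x ^ m * (1 - x) ^ p := by
  rw [add_assoc m p 1, Finset.sum_range_add, Finset.sum_eq_zero (s := Finset.range m)]
  · have : (1 - x) = (-x) + 1 := by ring
    rw [zero_add, this, add_pow, Finset.mul_sum]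
    refine Finset.sum_congr rfl fun i hi => ?_
    rw [Finset.mem_range] at hi
    have h := Nat.choose_mul (n := m + p) (k := m + i) (s := m) (by omega)
    have h' : ((m + p).choose (m + i) : ℝ) * ((m + i).choose m : ℝ)
        = ((m + p).choose m : ℝ) * (p.choose i : ℝ) := by
      have e1 : m + p - m = p := by omega
      have e2 : m + i - m = i := by omega
      rw [e1, e2] at h
      exact_mod_cast h
    rw [if_pos (by omega), Nat.add_sub_cancel_left, neg_pow x, one_pow, pow_add]
    linear_combination ((-1) ^ i * x ^ m * x ^ i) * h'
  · intro n hn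
    rw [Finset.mem_range] at hn
    rw [if_neg (by omega)]
    simp

lemma fLk_diff (m k : ℕ) (x : ℝ) :
    fLk (m + k + 2) (k + 2) x - 2 * fLk (m + k + 2) (k + 1) x + fLk (m + k + 2) k x
      = ((m + k + 2).choose (k + 1) : ℝ) * (1 - x) ^ (k + 1) * x ^ (m + 1) := by
  have e0 := fLk_eq m (k + 2) x
  have e1 := fLk_eq (m + 1) (k + 1) x
  have e2 := fLk_eq (m + 2) k x
  have e3 := binom_part (m + 1) (k + 1) x
  rw [show m + (k + 2) = m + k + 2 by omega] at e0
  rw [show m + 1 + (k + 1) = m + k + 2 by omega] at e1 e3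
  rw [show m + 2 + k = m + k + 2 by omega] at e2
  have hc : (m + k + 2).choose (m + 1) = (m + k + 2).choose (k + 1) :=
    Nat.choose_symm_of_eq_add (by omega)
  rw [hc] at e3
  rw [e0, e1, e2, Finset.mul_sum, ← Finset.sum_sub_distrib, ← Finset.sum_add_distrib]
  rw [mul_right_comm, ← e3]
  refine Finset.sum_congr rfl fun n _ => ?_
  rw [← dCoef_diff]
  ring

lemma gLk_diff (m k : ℕ) (y x : ℝ) :
    gLk (m + k + 2) (k + 2) y x - 2 * gLk (m + k + 2) (k + 1) y x + gLk (m + k + 2) k y x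
      = ((m + k + 2).choose (k + 1) : ℝ) * y ^ (k + 1) * x ^ (m + 1) := by
  unfold gLk
  rw [Finset.mul_sum, ← Finset.sum_sub_distrib, ← Finset.sum_add_distrib]
  rw [Finset.sum_eq_single (k + 1)]
  · rw [show k + 2 - (k + 1) = 1 by omega, show k + 1 - (k + 1) = 0 by omega,
      show k - (k + 1) = 0 by omega, show m + k + 2 - (k + 1) = m + 1 by omega]
    push_cast
    ring
  · intro n _ hn
    have : ((k + 2 - n : ℕ) : ℝ) - 2 * ((k + 1 - n : ℕ) : ℝ) + ((k - n : ℕ) : ℝ) = 0 := by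
      rcases Nat.lt_or_ge n (k + 1) with h | h
      · rw [Nat.cast_sub (by omega), Nat.cast_sub (by omega), Nat.cast_sub (by omega)]
        push_cast
        ring
      · rw [show k + 2 - n = 0 by omega, show k + 1 - n = 0 by omega, show k - n = 0 by omega]
        simp
    linear_combination (((m + k + 2).choose n : ℝ) * y ^ n * x ^ (m + k + 2 - n)) * this
  · intro h
    exact absurd (Finset.mem_range.2 (by omega)) h

lemma f_eq_g (L : ℕ) (x : ℝ) : ∀ k, k ≤ L → fLk L k x = gLk L k (1 - x) x := by
  intro k
  induction k using Nat.twoStepInduction with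
  | zero => intro _; simp [fLk, gLk]
  | one =>
    intro h
    unfold gLk
    rw [Finset.sum_eq_single 0]
    · simp [fLk, Nat.sub_add_cancel h]
    · intro n _ hn
      rw [show 1 - n = 0 by omega]
      simp
    · simp
  | more k ih1 ih2 =>
    intro h
    obtain ⟨m, rfl⟩ := Nat.exists_eq_add_of_le h
    rw [show k + 2 + m = m + k + 2 by omega] at *
    have a := fLk_diff m k x
    have b := gLk_diff m k (1 - x) x
    have c := ih1 (by omega)
    have d := ih2 (by omega)
    linear_combination a - b + 2 * d - c

/-- multinomial term -/
noncomputable def tri (L : ℕ) (a b c : ℝ) (i j : ℕ) : ℝ :=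
  (L.factorial : ℝ) * (a ^ i / (i.factorial : ℝ) * (b ^ j / (j.factorial : ℝ) *
    (c ^ (L - i - j) / ((L - i - j).factorial : ℝ))))

lemma g_left (L k : ℕ) (a b c : ℝ) :
    gLk L k a (b + c) = ∑ i ∈ Finset.range (L + 1), ∑ j ∈ Finset.range (L - i + 1),
      ((k - i : ℕ) : ℝ) * tri L a b c i j := by
  unfold gLk
  refine Finset.sum_congr rfl fun i hi => ?_
  rw [Finset.mem_range] at hi
  rw [add_pow, Finset.mul_sum, Finset.mul_sum]
  refine Finset.sum_congr rfl fun j hj => ?_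
  rw [Finset.mem_range] at hj
  rw [Nat.cast_choose ℝ (show i ≤ L by omega), Nat.cast_choose ℝ (show j ≤ L - i by omega), tri]
  have := Nat.factorial_ne_zero (L - i)
  field_simp

lemma g_right (L k : ℕ) (a b c : ℝ) :
    gLk L k (a + b) c = ∑ i ∈ Finset.range (L + 1), ∑ j ∈ Finset.range (L - i + 1),
      ((k - i - j : ℕ) : ℝ) * tri L a b c i j := by
  have h : gLk L k (a + b) c = ∑ n ∈ Finset.range (L + 1), ∑ i ∈ Finset.range (n + 1),
      ((k - n : ℕ) : ℝ) * tri L a b c i (n - i) := by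
    unfold gLk
    refine Finset.sum_congr rfl fun n hn => ?_
    rw [Finset.mem_range] at hn
    rw [add_pow, Finset.mul_sum, Finset.sum_mul, Finset.mul_sum]
    refine Finset.sum_congr rfl fun i hi => ?_
    rw [Finset.mem_range] at hi
    rw [Nat.cast_choose ℝ (show n ≤ L by omega), Nat.cast_choose ℝ (show i ≤ n by omega), tri,
      show L - i - (n - i) = L - n by omega]
    have := Nat.factorial_ne_zero n
    field_simp
  rw [h, Finset.sum_sigma', Finset.sum_sigma']
  refine Finset.sum_nbij' (fun p => ⟨p.2, p.1 - p.2⟩) (fun p => ⟨p.1 + p.2, p.1⟩) ?_ ?_ ?_ ?_ ?_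
  · rintro ⟨n, i⟩ hp
    simp only [Finset.mem_sigma, Finset.mem_range] at hp ⊢
    omega
  · rintro ⟨n, i⟩ hp
    simp only [Finset.mem_sigma, Finset.mem_range] at hp ⊢
    omega
  · rintro ⟨n, i⟩ hp
    simp only [Finset.mem_sigma, Finset.mem_range] at hp ⊢
    rw [show i + (n - i) = n by omega]
  · rintro ⟨n, i⟩ hp
    simp only [Finset.mem_sigma, Finset.mem_range] at hp ⊢
    rw [show n + i - n = i by omega]
  · rintro ⟨n, i⟩ hp
    simp only [Finset.mem_sigma, Finset.mem_range] at hp ⊢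
    rw [show k - i - (n - i) = k - n by omega]

lemma zeta_eq (L k : ℕ) (hkL : k ≤ L) (r : ℕ → ℝ) (j : ℕ) :
    (L.factorial : ℝ) * zetaBar L k r j
      = ∑ i ∈ Finset.range (L + 1), ∑ n ∈ Finset.range (L - i + 1),
        (((k - i : ℕ) : ℝ) - ((k - i - n : ℕ) : ℝ)) *
          tri L (∑ m ∈ Finset.range j, r m) (r j) (∑' m : ℕ, r (j + 1 + m)) i n := by
  unfold zetaBar
  rw [Finset.mul_sum]
  have hsub : Finset.range k ⊆ Finset.range (L + 1) := Finset.range_subset_range.2 (by omega)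
  rw [← Finset.sum_subset hsub]
  · refine Finset.sum_congr rfl fun i hi => ?_
    rw [Finset.mem_range] at hi
    rw [Finset.mul_sum, Finset.mul_sum]
    have hs : Finset.Icc 1 (L - i) ⊆ Finset.range (L - i + 1) := by
      intro n hn
      rw [Finset.mem_Icc] at hn
      rw [Finset.mem_range]
      omega
    rw [← Finset.sum_subset hs]
    · refine Finset.sum_congr rfl fun n hn => ?_
      have hm : (min (n : ℝ) ((k : ℝ) - (i : ℝ)))
          = ((k - i : ℕ) : ℝ) - ((k - i - n : ℕ) : ℝ) := by
        rw [← Nat.cast_sub hi.le]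
        rcases le_total n (k - i) with h | h
        · rw [min_eq_left (by exact_mod_cast h), Nat.cast_sub h]
          ring
        · rw [min_eq_right (by exact_mod_cast h), show k - i - n = 0 by omega]
          simp
      rw [hm, tri]
      ring
    · intro n hn hn'
      rw [Finset.mem_range] at hn
      rw [Finset.mem_Icc] at hn'
      rw [show n = 0 by omega]
      simp
  · intro i _ hi
    rw [Finset.mem_range] at hi
    refine Finset.sum_eq_zero fun n _ => ?_
    rw [show k - i = 0 by omega]
    simp

/-- for `1 ≤ k ≤ L`, `r` a nonnegative sequence summing to `1`,
and `u_m = ∑_{i=m}^∞ r_i`, one has `L!·ζ̄(j,r) = f(u_j) − f(u_{j+1})` for every `j`. -/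
theorem factorial_mul_zetaBar_eq (L k : ℕ) (hk : 1 ≤ k) (hkL : k ≤ L)
    (r : ℕ → ℝ) (hr : ∀ j, 0 ≤ r j) (hsum : HasSum r 1)
    (u : ℕ → ℝ) (hu : ∀ m, u m = ∑' i : ℕ, r (m + i)) (j : ℕ) :
    (Nat.factorial L : ℝ) * zetaBar L k r j = fLk L k (u j) - fLk L k (u (j + 1)) := by
  have hs : Summable r := hsum.summable
  have h1 : ∀ n, ∑ m ∈ Finset.range n, r m + u n = 1 := by
    intro n
    have h := hs.sum_add_tsum_nat_add n
    rw [hsum.tsum_eq] at h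
    rw [hu, ← h]
    simp only [add_comm]
  have ha := h1 j
  have hb := h1 (j + 1)
  rw [Finset.sum_range_succ] at hb
  rw [f_eq_g L _ k hkL, f_eq_g L _ k hkL, zeta_eq L k hkL, ← hu (j + 1)]
  have e1 : 1 - u j = ∑ m ∈ Finset.range j, r m := by linarith
  have e2 : u j = r j + u (j + 1) := by linarith
  have e3 : 1 - u (j + 1) = ∑ m ∈ Finset.range j, r m + r j := by linarith
  rw [e1, e3, e2, g_left, g_right, ← Finset.sum_sub_distrib]
  refine Finset.sum_congr rfl fun i _ => ?_
  rw [← Finset.sum_sub_distrib]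
  refine Finset.sum_congr rfl fun n _ => ?_
  ring
end

section
/- Let 1 ≤ k ≤ L be integers, r = (r_j)_{j≥0} a nonnegative real sequence summing to 1, and u_m = ∑_{i=m}^{∞} r_i. Then for every ℓ ∈ {1,…,k} and every m ≥ 0, ∑_{j=m}^{∞} ∑_{i1=0}^{ℓ−1} C(L,i1)·(1−u_j)^{i1} · ∑_{i2=ℓ−i1}^{L−i1} C(L−i1,i2)·r_j^{i2}·u_{j+1}^{L−i1−i2} = ∑_{j=L−ℓ+1}^{L} C(L,j)·u_m^{j}·(1−u_m)^{L−j}. -/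
open Finset

lemma tail_aux_step (L l : ℕ) (hlL : l ≤ L) (a b c : ℝ) :
    (∑ i1 ∈ Finset.range l, (L.choose i1 : ℝ) * a ^ i1 *
          ∑ i2 ∈ Finset.Icc (l - i1) (L - i1),
            ((L - i1).choose i2 : ℝ) * b ^ i2 * c ^ (L - i1 - i2)) =
    (∑ i ∈ Finset.range l, (L.choose i : ℝ) * a ^ i * (b + c) ^ (L - i)) -
    (∑ i ∈ Finset.range l, (L.choose i : ℝ) * (a + b) ^ i * c ^ (L - i)) := by
  have h1 : ∀ i1 ∈ Finset.range l,
      (L.choose i1 : ℝ) * a ^ i1 * ∑ i2 ∈ Finset.Icc (l - i1) (L - i1),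
            ((L - i1).choose i2 : ℝ) * b ^ i2 * c ^ (L - i1 - i2) =
      (L.choose i1 : ℝ) * a ^ i1 * (b + c) ^ (L - i1) -
       ∑ i2 ∈ Finset.range (l - i1), (L.choose i1 : ℝ) * a ^ i1 *
            (((L - i1).choose i2 : ℝ) * b ^ i2 * c ^ (L - i1 - i2)) := by
    intro i hi
    rw [Finset.mem_range] at hi
    have hs := Finset.sum_range_add_sum_Ico
      (fun i2 => ((L - i).choose i2 : ℝ) * b ^ i2 * c ^ (L - i - i2))
      (show l - i ≤ L - i + 1 by omega)
    have hI : Finset.Ico (l - i) (L - i + 1) = Finset.Icc (l - i) (L - i) := by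
      ext x; simp only [Finset.mem_Ico, Finset.mem_Icc]; omega
    rw [hI] at hs
    have hb : (b + c) ^ (L - i) = ∑ i2 ∈ Finset.range (L - i + 1),
        ((L - i).choose i2 : ℝ) * b ^ i2 * c ^ (L - i - i2) := by
      rw [add_pow]
      refine Finset.sum_congr rfl fun x _ => by ring
    rw [← Finset.mul_sum, hb, ← hs]
    ring
  rw [Finset.sum_congr rfl h1, Finset.sum_sub_distrib]
  congr 1
  rw [← Finset.sum_range_diag_flip l (fun i1 i2 => (L.choose i1 : ℝ) * a ^ i1 *
            (((L - i1).choose i2 : ℝ) * b ^ i2 * c ^ (L - i1 - i2)))]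
  refine Finset.sum_congr rfl fun s hs => ?_
  rw [Finset.mem_range] at hs
  rw [add_pow, Finset.mul_sum, Finset.sum_mul]
  refine Finset.sum_congr rfl fun i hi => ?_
  rw [Finset.mem_range] at hi
  have e : L - i - (s - i) = L - s := by omega
  have hc : (L.choose s : ℝ) * (s.choose i : ℝ) = L.choose i * ((L - i).choose (s - i) : ℝ) := by
    exact_mod_cast Nat.choose_mul (show i ≤ s by omega)
  rw [e]
  linear_combination (-(a ^ i * b ^ (s - i) * c ^ (L - s))) * hc



/-- for `1 ≤ k ≤ L`, `r` a nonnegative sequence summing to `1`,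
`u_m = ∑_{i=m}^∞ r_i`, for every `ℓ ∈ {1,…,k}` and every `m ≥ 0`,
`∑_{j=m}^{∞} ∑_{i1=0}^{ℓ−1} C(L,i1)·(1−u_j)^{i1} ·
   ∑_{i2=ℓ−i1}^{L−i1} C(L−i1,i2)·r_j^{i2}·u_{j+1}^{L−i1−i2}
 = ∑_{j=L−ℓ+1}^{L} C(L,j)·u_m^{j}·(1−u_m)^{L−j}`. -/
theorem tsum_tail_eq_binomial_tail (L k : ℕ) (hk : 1 ≤ k) (hkL : k ≤ L)
    (r : ℕ → ℝ) (hr : ∀ j, 0 ≤ r j) (hsum : HasSum r 1)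
    (u : ℕ → ℝ) (hu : ∀ m', u m' = ∑' i : ℕ, r (m' + i))
    (l : ℕ) (hl1 : 1 ≤ l) (hlk : l ≤ k) (m : ℕ) :
    (∑' j : ℕ, ∑ i1 ∈ Finset.range l,
        (L.choose i1 : ℝ) * (1 - u (m + j)) ^ i1 *
          ∑ i2 ∈ Finset.Icc (l - i1) (L - i1),
            ((L - i1).choose i2 : ℝ) * r (m + j) ^ i2 * u (m + j + 1) ^ (L - i1 - i2)) =
      ∑ j ∈ Finset.Icc (L - l + 1) L,
        (L.choose j : ℝ) * u m ^ j * (1 - u m) ^ (L - j) := by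
  have hlL : l ≤ L := hlk.trans hkL
  have hu' : ∀ n, u n = 1 - ∑ i ∈ Finset.range n, r i := by
    intro n
    have h := hsum.summable.sum_add_tsum_nat_add n
    rw [hsum.tsum_eq] at h
    rw [hu n, ← h]
    simp [add_comm]
  have hrec : ∀ n, u n = r n + u (n + 1) := by
    intro n
    rw [hu' n, hu' (n + 1), Finset.sum_range_succ]; ring
  have hu0 : ∀ n, 0 ≤ u n := fun n => by
    rw [hu n]; exact tsum_nonneg fun i => hr _
  have hu1 : ∀ n, 0 ≤ 1 - u n := fun n => by
    rw [hu' n]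
    have := Finset.sum_nonneg (s := Finset.range n) (f := r) fun i _ => hr i
    linarith
  have hlim : Filter.Tendsto u Filter.atTop (nhds 0) := by
    have h := (hsum.tendsto_sum_nat).const_sub 1
    rw [sub_self] at h
    exact h.congr fun n => (hu' n).symm
  set G : ℝ → ℝ := fun v => ∑ i ∈ Finset.range l, (L.choose i : ℝ) * (1 - v) ^ i * v ^ (L - i)
    with hG
  have hG0 : G 0 = 0 := by
    rw [hG]
    refine Finset.sum_eq_zero fun i hi => ?_
    rw [Finset.mem_range] at hi
    rw [zero_pow (by omega), mul_zero]
  have hGc : Continuous G := by rw [hG]; fun_prop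
  have hterm : ∀ n, (∑ i1 ∈ Finset.range l,
        (L.choose i1 : ℝ) * (1 - u n) ^ i1 *
          ∑ i2 ∈ Finset.Icc (l - i1) (L - i1),
            ((L - i1).choose i2 : ℝ) * r n ^ i2 * u (n + 1) ^ (L - i1 - i2)) =
      G (u n) - G (u (n + 1)) := by
    intro n
    rw [tail_aux_step L l hlL, ← hrec n,
      show 1 - u n + r n = 1 - u (n + 1) by rw [hrec n]; ring]
  have hR : ∑ j ∈ Finset.Icc (L - l + 1) L,
        (L.choose j : ℝ) * u m ^ j * (1 - u m) ^ (L - j) = G (u m) := by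
    rw [hG]
    refine Finset.sum_bij' (fun j _ => L - j) (fun i _ => L - i) ?_ ?_ ?_ ?_ ?_
    · intro j hj; simp only [Finset.mem_Icc, Finset.mem_range] at *; omega
    · intro j hj; simp only [Finset.mem_Icc, Finset.mem_range] at *; omega
    · intro j hj; simp only [Finset.mem_Icc] at *; omega
    · intro j hj; simp only [Finset.mem_range] at *; omega
    · intro j hj
      simp only [Finset.mem_Icc] at hj
      rw [Nat.choose_symm hj.2, Nat.sub_sub_self hj.2]; ring
  rw [hR]
  refine HasSum.tsum_eq ?_
  rw [hasSum_iff_tendsto_nat_of_nonneg]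
  · have hs : ∀ n, ∑ j ∈ Finset.range n, (∑ i1 ∈ Finset.range l,
        (L.choose i1 : ℝ) * (1 - u (m + j)) ^ i1 *
          ∑ i2 ∈ Finset.Icc (l - i1) (L - i1),
            ((L - i1).choose i2 : ℝ) * r (m + j) ^ i2 * u (m + j + 1) ^ (L - i1 - i2)) =
        G (u m) - G (u (m + n)) := by
      intro n
      rw [Finset.sum_congr rfl fun j _ => hterm (m + j)]
      exact Finset.sum_range_sub' (fun j => G (u (m + j))) n
    simp only [hs]
    have h1 : Filter.Tendsto (fun n => u (m + n)) Filter.atTop (nhds 0) := by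
      have := (Filter.tendsto_add_atTop_iff_nat m).2 hlim
      simpa [add_comm] using this
    have h2 := ((hGc.tendsto 0).comp h1).const_sub (G (u m))
    rw [hG0, sub_zero] at h2
    exact h2
  · intro j
    refine Finset.sum_nonneg fun i _ => mul_nonneg
      (mul_nonneg (Nat.cast_nonneg _) (pow_nonneg (hu1 _) _)) (Finset.sum_nonneg fun i2 _ => ?_)
    exact mul_nonneg (mul_nonneg (Nat.cast_nonneg _) (pow_nonneg (hr _) _)) (pow_nonneg (hu0 _) _)
end

section
/- Let 1 ≤ k < L be integers and 0 ≤ λ ≤ 1. If ū satisfies the fixed-point recursion ū_0 = 1 and ū_{m+1} = (λ/k)·f(ū_m), then for all m ≥ 0, ū_m ≥ λ^{((L−k+1)^m − 1)/(L−k)}. -/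
open Finset

/-- Newton-type sum. -/
noncomputable def SS (x : ℝ) (L : ℕ) (c : ℕ → ℝ) : ℝ :=
  ∑ i ∈ Finset.range (L + 1), (L.choose i : ℝ) * c i * x ^ i

lemma SS_succ (x : ℝ) (L : ℕ) (c : ℕ → ℝ) :
    SS x (L + 1) c = SS x L c + x * SS x L (fun i => c (i + 1)) := by
  unfold SS
  rw [Finset.sum_range_succ' _ (L + 1)]
  have h1 : ∑ i ∈ Finset.range (L + 1), (L.choose i : ℝ) * c i * x ^ i
      = ∑ i ∈ Finset.range (L + 1), (L.choose (i + 1) : ℝ) * c (i + 1) * x ^ (i + 1) + c 0 := by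
    have := Finset.sum_range_succ (fun i => (L.choose i : ℝ) * c i * x ^ i) (L + 1)
    rw [Finset.sum_range_succ' _ (L + 1)] at this
    simp at this
    linarith
  rw [h1, Finset.mul_sum]
  simp only [Nat.choose_succ_succ, Nat.cast_add, Nat.choose_zero_right, Nat.cast_one, pow_zero]
  rw [add_right_comm, ← Finset.sum_add_distrib]
  rw [show (1 : ℝ) * c 0 * 1 = c 0 by ring]
  congr 1
  refine Finset.sum_congr rfl fun i _ => ?_
  ring

/-- coefficients of the tail probability -/
noncomputable def aa : ℕ → ℕ → ℝ
  | 0, 0 => 1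
  | 0, _ + 1 => 0
  | _ + 1, 0 => 0
  | i + 1, d + 1 => (-1) ^ (i + d) * (i.choose d : ℝ)

lemma aa_rec (i d : ℕ) : aa (i + 1) (d + 1) = aa i d - aa i (d + 1) := by
  rcases i with _ | i <;> rcases d with _ | d
  · simp [aa]
  · simp [aa]
  · simp [aa, pow_succ]
  · simp only [aa, Nat.choose_succ_succ, Nat.cast_add]
    ring

lemma SS_zero_col (x : ℝ) (L : ℕ) : SS x L (fun i => aa i 0) = 1 := by
  unfold SS
  rw [Finset.sum_range_succ']
  simp [aa]

lemma SS_rec (x : ℝ) (L d : ℕ) : SS x (L + 1) (fun i => aa i (d + 1)) =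
    (1 - x) * SS x L (fun i => aa i (d + 1)) + x * SS x L (fun i => aa i d) := by
  rw [SS_succ]
  have : SS x L (fun i => aa (i + 1) (d + 1))
      = SS x L (fun i => aa i d) - SS x L (fun i => aa i (d + 1)) := by
    unfold SS
    rw [← Finset.sum_sub_distrib]
    refine Finset.sum_congr rfl fun i _ => ?_
    simp only [aa_rec]; ring
  rw [this]; ring

lemma SS_bounds (x : ℝ) (h0 : 0 ≤ x) (h1 : x ≤ 1) (L : ℕ) : ∀ d : ℕ,
    0 ≤ SS x L (fun i => aa i d) ∧ SS x L (fun i => aa i d) ≤ 1 ∧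
      (d ≤ L → x ^ d ≤ SS x L (fun i => aa i d)) := by
  have hy : 0 ≤ 1 - x := by linarith
  induction L with
  | zero =>
    intro d
    rcases d with _ | d <;> simp [SS, aa]
  | succ L ih =>
    intro d
    rcases d with _ | d
    · rw [SS_zero_col]; simp
    · rw [SS_rec]
      obtain ⟨p1, p2, p3⟩ := ih d
      obtain ⟨q1, q2, q3⟩ := ih (d + 1)
      refine ⟨by positivity, by nlinarith, fun hd => ?_⟩
      have p := mul_le_mul_of_nonneg_left (p3 (by omega)) h0
      rcases Nat.lt_or_ge d L with h | h
      · have q := mul_le_mul_of_nonneg_left (q3 h) hy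
        have hx : x * x ^ (d + 1) ≤ x * x ^ d :=
          mul_le_mul_of_nonneg_left (pow_le_pow_of_le_one h0 h1 (by omega)) h0
        have hp := mul_nonneg hy q1
        have : x ^ (d + 1) = x * x ^ d := by ring
        linarith
      · have hp := mul_nonneg hy q1
        have : x ^ (d + 1) = x * x ^ d := by ring
        linarith

/-- coefficients of f -/
noncomputable def bb (d : ℕ) : ℕ → ℝ
  | 0 => 0
  | i + 1 => aa i d

lemma bb_zero (e i : ℕ) (h : i ≤ e + 1) : bb (e + 1) i = 0 := by
  rcases i with _ | _ | i
  · rfl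
  · rfl
  · simp only [bb, aa]
    rw [Nat.choose_eq_zero_of_lt (by omega)]; simp

lemma fLk_eq_s4 (e k : ℕ) (x : ℝ) : fLk (e + 1 + k) k x = SS x (e + 1 + k) (bb (e + 1)) := by
  unfold fLk SS
  rw [show e + 1 + k + 1 = (e + 2) + k by ring, Finset.sum_range_add]
  rw [Finset.sum_eq_zero (s := Finset.range (e + 2)), zero_add]
  · rw [← Finset.Ico_add_one_right_eq_Icc, Finset.sum_Ico_eq_sum_range]
    refine Finset.sum_congr (by simp) fun i _ => ?_
    have h1 : e + 1 + k - k + (1 + i) = e + 2 + i := by omega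
    have h2 : e + 2 + i = (e + i) + 1 + 1 := by omega
    rw [h1, h2]
    simp only [bb, aa, Nat.add_sub_cancel_left]
    rw [show e + i + 1 + 1 - 2 = e + i by omega]
    rw [Nat.choose_symm_add]
    rw [show e + i + e = i + 2 * e by ring, pow_add (-1 : ℝ) i, pow_mul, neg_one_sq, one_pow]
    ring
  · intro i hi
    rw [bb_zero e i (by simp at hi; omega)]; simp

lemma fLk_bounds (e k : ℕ) (x : ℝ) (h0 : 0 ≤ x) (h1 : x ≤ 1) :
    k * x ^ (e + 2) ≤ fLk (e + 1 + k) k x ∧ fLk (e + 1 + k) k x ≤ k := by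
  rw [fLk_eq_s4]
  induction k with
  | zero =>
    have : SS x (e + 1 + 0) (bb (e + 1)) = 0 := by
      unfold SS
      refine Finset.sum_eq_zero fun i hi => ?_
      rw [bb_zero e i (by simp at hi; omega)]; simp
    rw [this]; simp
  | succ k ih =>
    rw [← add_assoc, SS_succ]
    have hb : (fun i => bb (e + 1) (i + 1)) = fun i => aa i (e + 1) := rfl
    rw [hb]
    obtain ⟨p1, p2, p3⟩ := SS_bounds x h0 h1 (e + 1 + k) (e + 1)
    have p := mul_le_mul_of_nonneg_left (p3 (by omega)) h0
    have : x ^ (e + 2) = x * x ^ (e + 1) := by ring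
    push_cast
    constructor
    · linarith [ih.1]
    · nlinarith [ih.2]

/-- lower bound, Theorem 2.2(ii): for `1 ≤ k < L`, `0 ≤ λ ≤ 1`, and
`ū` satisfying `ū_0 = 1`, `ū_{m+1} = (λ/k)·f(ū_m)`, one has
`ū_m ≥ λ^{((L−k+1)^m − 1)/(L−k)}` for all `m`. -/
theorem fixedPoint_lower_bound (L k : ℕ) (hk : 1 ≤ k) (hkL : k < L)
    (lam : ℝ) (hlam0 : 0 ≤ lam) (hlam1 : lam ≤ 1)
    (ubar : ℕ → ℝ) (h0 : ubar 0 = 1)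
    (hrec : ∀ m : ℕ, ubar (m + 1) = lam / k * fLk L k (ubar m)) (m : ℕ) :
    lam ^ ((((L : ℝ) - k + 1) ^ m - 1) / ((L : ℝ) - k)) ≤ ubar m := by
  obtain ⟨e, rfl⟩ : ∃ e, L = e + 1 + k := ⟨L - k - 1, by omega⟩
  have hd : (((e + 1 + k : ℕ) : ℝ) - k) = (e : ℝ) + 1 := by push_cast; ring
  rw [hd]
  have hkpos : (0 : ℝ) < k := by exact_mod_cast hk
  suffices H : lam ^ ((((e : ℝ) + 1 + 1) ^ m - 1) / ((e : ℝ) + 1)) ≤ ubar m ∧ ubar m ≤ 1 from H.1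
  induction m with
  | zero => simp [h0]
  | succ m ih =>
    obtain ⟨i1, i2⟩ := ih
    set t := (((e : ℝ) + 1 + 1) ^ m - 1) / ((e : ℝ) + 1) with ht
    have hpos : (0 : ℝ) < (e : ℝ) + 1 := by positivity
    have ht0 : 0 ≤ t := by
      have : (1 : ℝ) ≤ ((e : ℝ) + 1 + 1) ^ m := one_le_pow₀ (by linarith)
      exact div_nonneg (by linarith) hpos.le
    have hp0 : 0 ≤ lam ^ t := Real.rpow_nonneg hlam0 t
    have hu0 : 0 ≤ ubar m := hp0.trans i1
    have het : (((e : ℝ) + 1 + 1) ^ (m + 1) - 1) / ((e : ℝ) + 1) = 1 + t * ((e + 2 : ℕ) : ℝ) := by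
      rw [ht]; push_cast; field_simp; ring
    obtain ⟨f1, f2⟩ := fLk_bounds e k (ubar m) hu0 i2
    have hc : 0 ≤ lam / k := by positivity
    rw [het, hrec]
    rw [Real.rpow_add_of_nonneg hlam0 zero_le_one (by positivity), Real.rpow_one,
      Real.rpow_mul hlam0, Real.rpow_natCast]
    constructor
    · calc lam * (lam ^ t) ^ (e + 2) ≤ lam * ubar m ^ (e + 2) := by gcongr
        _ = lam / k * (k * ubar m ^ (e + 2)) := by field_simp
        _ ≤ _ := mul_le_mul_of_nonneg_left f1 hc
    · calc _ ≤ lam / k * k := mul_le_mul_of_nonneg_left f2 hc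
        _ = lam := by field_simp
        _ ≤ 1 := hlam1
end

section
/- Let 1 ≤ k ≤ L be integers. Then for every x ∈ [0,1], f(x) ≥ k·x^{L−k+1}. -/
open Finset

/-- Shifted partial sums of the polynomial. -/
noncomputable def gAux (N L m : ℕ) (x : ℝ) : ℝ :=
  ∑ j ∈ Finset.range N,
    (L.choose (m + 1 + j) : ℝ) * ((m + 1 + j - 2).choose j : ℝ) *
      (-1 : ℝ) ^ j * x ^ (m + 1 + j)

lemma gAux_rec (N L m : ℕ) (x : ℝ) :
    gAux (N + 1) (L + 1) (m + 1) x =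
      x * gAux (N + 1) L m x + (1 - x) * gAux (N + 1) L (m + 1) x
        + (L.choose (m + 2 + N) : ℝ) * ((m + N).choose N : ℝ) * (-1 : ℝ) ^ N
          * x ^ (m + 3 + N) := by
  induction N with
  | zero =>
    simp only [gAux, Finset.sum_range_succ, Finset.sum_range_zero, Nat.choose_zero_right,
      Nat.choose_succ_succ L, add_zero, Nat.cast_add]
    push_cast
    ring
  | succ N ih =>
    have e : ∀ L m : ℕ, gAux (N + 1 + 1) L m x = gAux (N + 1) L m x +
        (L.choose (m + 1 + (N + 1)) : ℝ) * ((m + N).choose (N + 1) : ℝ) *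
      (-1 : ℝ) ^ (N + 1) * x ^ (m + 1 + (N + 1)) := by
      intro L m
      unfold gAux
      rw [Finset.sum_range_succ _ (N + 1)]
      rw [show m + 1 + (N + 1) - 2 = m + N by omega]
    rw [e, e, e, ih]
    have h1 : (L + 1).choose (m + 1 + 1 + (N + 1)) =
        L.choose (m + 2 + N) + L.choose (m + 3 + N) := by
      rw [show m + 1 + 1 + (N + 1) = (m + 2 + N) + 1 by ring, Nat.choose_succ_succ]
      congr 2
      omega
    have h2 : (m + 1 + N).choose (N + 1) = (m + N).choose N + (m + N).choose (N + 1) := by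
      rw [show m + 1 + N = (m + N) + 1 by ring, Nat.choose_succ_succ]
    rw [h1, show m + (N + 1) = m + 1 + N by ring, h2,
      show m + 1 + 1 + (N + 1) = m + 3 + N by ring,
      show m + 1 + (N + 1) = m + 2 + N by ring]
    push_cast
    ring

lemma gAux_self (N m : ℕ) (x : ℝ) : gAux N m m x = 0 := by
  unfold gAux
  apply Finset.sum_eq_zero
  intro j _
  rw [Nat.choose_eq_zero_of_lt (by omega)]
  simp

lemma gAux_zero (N L : ℕ) (x : ℝ) : gAux (N + 1) L 0 x = L * x := by
  unfold gAux
  rw [Finset.sum_range_succ', Finset.sum_eq_zero]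
  · simp
  · intro j _
    rw [Nat.choose_eq_zero_of_lt (show 0 + 1 + (j + 1) - 2 < j + 1 by omega)]
    simp

lemma gAux_ge (x : ℝ) (h0 : 0 ≤ x) (h1 : x ≤ 1) (N L : ℕ) : ∀ m : ℕ, m ≤ L → L ≤ m + (N + 1) →
    ((L : ℝ) - m) * x ^ (m + 1) ≤ gAux (N + 1) L m x := by
  induction L with
  | zero =>
    intro m hm _
    obtain rfl : m = 0 := by omega
    simp [gAux_zero]
  | succ L ih =>
    intro m hm hN
    rcases m with _ | m
    · simp [gAux_zero]
    rcases Nat.lt_or_ge m L with h | h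
    · rw [gAux_rec, Nat.choose_eq_zero_of_lt (show L < m + 2 + N by omega)]
      have a := mul_le_mul_of_nonneg_left (ih m (by omega) (by omega)) h0
      have b := mul_le_mul_of_nonneg_left (ih (m + 1) (by omega) (by omega)) (sub_nonneg.2 h1)
      have hc : (m : ℝ) + 1 ≤ L := by exact_mod_cast h
      have c : 0 ≤ (1 - x) * (((L : ℝ) - (m + 1)) * x ^ (m + 1 + 1)) :=
        mul_nonneg (sub_nonneg.2 h1) (mul_nonneg (sub_nonneg.2 hc) (by positivity))
      push_cast at a b ⊢
      have d : x * (((L : ℝ) - m) * x ^ (m + 1)) = ((L : ℝ) + 1 - (m + 1)) * x ^ (m + 1 + 1) := by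
        ring
      linarith
    · obtain rfl : m = L := by omega
      simp [gAux_self]

/-- for `1 ≤ k ≤ L` and every `x ∈ [0,1]`, `f(x) ≥ k·x^{L−k+1}`. -/
theorem f_ge_pow (L k : ℕ) (hk : 1 ≤ k) (hkL : k ≤ L)
    (x : ℝ) (hx : x ∈ Set.Icc (0 : ℝ) 1) :
    (k : ℝ) * x ^ (L - k + 1) ≤ fLk L k x := by
  obtain ⟨N, rfl⟩ : ∃ N, k = N + 1 := ⟨k - 1, by omega⟩
  obtain ⟨m, rfl⟩ : ∃ m, L = m + (N + 1) := ⟨L - (N + 1), by omega⟩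
  have h := gAux_ge x hx.1 hx.2 N (m + (N + 1)) m (by omega) le_rfl
  have e : fLk (m + (N + 1)) (N + 1) x = gAux (N + 1) (m + (N + 1)) m x := by
    unfold fLk gAux
    rw [Nat.add_sub_cancel, Finset.range_eq_Ico, ← Finset.Ico_add_one_right_eq_Icc,
      Finset.sum_Ico_eq_sum_range, ← Finset.range_eq_Ico]
    apply Finset.sum_congr (by simp)
    intro j _
    rw [show 1 + j - 1 = j by omega, ← add_assoc m 1 j]
  rw [e, Nat.add_sub_cancel]
  refine le_trans (le_of_eq ?_) h
  push_cast
  ring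
end

section
/- Let 1 ≤ k ≤ L be integers and define w(x) = x·f'(x) − (L−k+1)·f(x), where f' is the derivative of f. Then w(x) ≤ 0 for all x ∈ [0,1]. -/
open Finset

open Polynomial in
lemma G_eq (L : ℕ) : (∑ n ∈ range L, ((L+1).choose (n+2) : ℝ[X]) * X ^ n)
    = ∑ b ∈ range (L+1), ∑ a ∈ range b, (X + 1 : ℝ[X]) ^ a := by
  induction L with
  | zero => simp
  | succ L ih =>
    rw [Finset.sum_range_succ _ (L+1), ← ih]
    have h := Polynomial.geom_sum_X_comp_X_add_one_eq_sum (R := ℝ) (L+1)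
    simp only [Polynomial.sum_comp, Polynomial.X_pow_comp] at h
    rw [h]
    have e : (∑ n ∈ range L, ((L+1).choose (n+2) : ℝ[X]) * X ^ n)
        = ∑ n ∈ range (L+1), ((L+1).choose (n+2) : ℝ[X]) * X ^ n := by
      rw [Finset.sum_range_succ]; simp
    rw [e, ← Finset.sum_add_distrib]
    refine Finset.sum_congr rfl fun n _ => ?_
    rw [Nat.choose_succ_succ (L+1) (n+1)]
    push_cast
    ring

open Polynomial in
lemma key (L r : ℕ) (y : ℝ) (hy : 0 ≤ 1 + y) :
    0 ≤ ∑ n ∈ range L, ((L+1).choose (n+2) : ℝ) * (n.choose r : ℝ) * y ^ (n - r) := by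
  have h := congrArg (fun p => (hasseDeriv r p).eval y) (G_eq L)
  simp only [map_sum, eval_finsetSum] at h
  have e : ∀ n : ℕ, (hasseDeriv r (((L+1).choose (n+2) : ℝ[X]) * X ^ n)).eval y
      = ((L+1).choose (n+2) : ℝ) * (n.choose r : ℝ) * y ^ (n - r) := by
    intro n
    have : ((L+1).choose (n+2) : ℝ[X]) * X ^ n = monomial n ((L+1).choose (n+2) : ℝ) := by
      rw [← C_mul_X_pow_eq_monomial]; simp
    rw [this, hasseDeriv_monomial, eval_monomial]
    ring
  simp only [e] at h
  rw [h]
  refine Finset.sum_nonneg fun b _ => Finset.sum_nonneg fun a _ => ?_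
  rw [← taylor_coeff]
  have : taylor y ((X + 1 : ℝ[X]) ^ a) = (X + C (1 + y)) ^ a := by
    rw [taylor_apply]
    simp only [pow_comp, add_comp, X_comp, one_comp, C_add, C_1]
    ring
  rw [this, coeff_X_add_C_pow]
  positivity

/-- for `1 ≤ k ≤ L`, the function `w(x) = x·f'(x) − (L−k+1)·f(x)`
satisfies `w(x) ≤ 0` for all `x ∈ [0,1]`. -/
theorem w_nonpos (L k : ℕ) (hk : 1 ≤ k) (hkL : k ≤ L)
    (x : ℝ) (hx : x ∈ Set.Icc (0 : ℝ) 1) :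
    x * deriv (fLk L k) x - ((L : ℝ) - k + 1) * fLk L k x ≤ 0 := by
  obtain ⟨hx0, hx1⟩ := hx
  obtain ⟨K, rfl⟩ : ∃ K, k = K + 1 := ⟨k - 1, by omega⟩
  obtain ⟨M, rfl⟩ : ∃ M, L = M + K + 1 := ⟨L - (K + 1), by omega⟩
  have hf : fLk (M+K+1) (K+1) = fun x => ∑ j ∈ range (K+1),
      ((M+K+1).choose (M+1+j) : ℝ) * ((M+1+j-2).choose j : ℝ) * (-1)^j * x^(M+1+j) := by
    funext x
    unfold fLk
    have hI : Finset.Icc 1 (K+1) = Finset.Ico (0+1) (K+1+1) := by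
      ext; simp only [Finset.mem_Icc, Finset.mem_Ico]; omega
    rw [hI, ← Finset.sum_Ico_add' _ 0 (K+1) 1, ← Finset.range_eq_Ico]
    refine Finset.sum_congr rfl fun j _ => ?_
    have h1 : M + K + 1 - (K + 1) + (j + 1) = M + 1 + j := by omega
    rw [h1, Nat.add_sub_cancel]
  have hd : HasDerivAt (fLk (M+K+1) (K+1)) (∑ j ∈ range (K+1),
      ((M+K+1).choose (M+1+j) : ℝ) * ((M+1+j-2).choose j : ℝ) * (-1)^j *
        (((M+1+j : ℕ) : ℝ) * x^(M+1+j-1))) x := by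
    rw [hf]
    exact HasDerivAt.fun_sum fun j _ => (hasDerivAt_pow _ x).const_mul _
  rw [hd.deriv, hf]
  have hkey := key (M+K) M (-x) (by linarith)
  rw [Finset.sum_range_add] at hkey
  have hz : ∑ n ∈ range M, ((M+K+1).choose (n+2) : ℝ) * (n.choose M : ℝ) * (-x) ^ (n - M) = 0 := by
    refine Finset.sum_eq_zero fun n hn => ?_
    rw [Nat.choose_eq_zero_of_lt (Finset.mem_range.1 hn)]; simp
  rw [hz, zero_add] at hkey
  have hw : x * (∑ j ∈ range (K+1),
      ((M+K+1).choose (M+1+j) : ℝ) * ((M+1+j-2).choose j : ℝ) * (-1)^j *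
        (((M+1+j : ℕ) : ℝ) * x^(M+1+j-1))) - (((M+K+1:ℕ) : ℝ) - ((K+1:ℕ):ℝ) + 1) *
      (∑ j ∈ range (K+1),
      ((M+K+1).choose (M+1+j) : ℝ) * ((M+1+j-2).choose j : ℝ) * (-1)^j * x^(M+1+j))
      = - (M * x^(M+2) * ∑ t ∈ range K, ((M+K+1).choose (M+t+2) : ℝ) *
        ((M+t).choose M : ℝ) * (-x) ^ (M + t - M)) := by
    rw [Finset.mul_sum, Finset.mul_sum, ← Finset.sum_sub_distrib, Finset.sum_range_succ',
      Finset.mul_sum, ← Finset.sum_neg_distrib]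
    have h0 : ∀ a b : ℝ, a = b → ∀ c : ℝ, c = 0 → a + c = b := by
      intro a b h c hc; rw [h, hc, add_zero]
    apply h0
    · refine Finset.sum_congr rfl fun t _ => ?_
      have h1 : M + 1 + (t+1) = M + t + 2 := by ring
      have h2 : M + t + 2 - 1 = M + t + 1 := by omega
      rw [h1, h2, Nat.add_sub_cancel, Nat.add_sub_cancel_left]
      have h3 := Nat.choose_succ_right_eq (M+t) t
      rw [Nat.add_sub_cancel, ← Nat.choose_symm_add] at h3
      have h4 : ((M+t).choose (t+1) : ℝ) * (t+1) = ((M+t).choose M : ℝ) * M := by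
        exact_mod_cast h3
      rw [neg_pow x t]
      push_cast
      linear_combination (((M+K+1).choose (M+t+2) : ℝ)) * (-1)^(t+1) * x^(M+t+2) * h4
    · simp only [add_zero, Nat.add_sub_cancel]
      push_cast
      ring
  refine hw.trans_le ?_
  have : (0:ℝ) ≤ M * x^(M+2) := by positivity
  exact neg_nonpos.2 (mul_nonneg this hkey)
end

section
/- Let 1 ≤ k ≤ L be integers and λ > 0. For every g ∈ Ū, there exists exactly one solution of the mean-field ODE system with initial condition g taking values in Ū for all t ≥ 0. -/
open Finset Set

/-- Membership in `Ū`: real sequences with `1 = u_0 ≥ u_1 ≥ … ≥ 0`. -/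
def InUbar (u : ℕ → ℝ) : Prop :=
  u 0 = 1 ∧ (∀ j, u (j + 1) ≤ u j) ∧ (∀ j, 0 ≤ u j)

/-- A `Ū`-valued solution of the mean-field ODE system \eqref{eqn:sODE}
with initial condition `g`. -/
def IsMFSol (L k : ℕ) (lam : ℝ) (g : ℕ → ℝ) (u : ℝ → ℕ → ℝ) : Prop :=
  (∀ j, u 0 j = g j) ∧
  (∀ t ∈ Set.Ici (0 : ℝ), InUbar (u t)) ∧
  (∀ j, 1 ≤ j → ∀ t ∈ Set.Ici (0 : ℝ),
    HasDerivWithinAt (fun τ => u τ j)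
      (lam * (fLk L k (u t (j - 1)) - fLk L k (u t j)) - k * (u t j - u t (j + 1)))
      (Set.Ici (0 : ℝ)) t)

namespace MF

lemma choose_id (p q r : ℕ) (hr : r ≤ q) :
    (((p + q + 2).choose (p + 2 + r) : ℕ) : ℝ) * ((p + r).choose r : ℝ) * (p + 2 + r) * (p + 1 + r)
      = (p + q + 2) * (p + q + 1) * ((p + q).choose p : ℝ) * (q.choose r : ℝ) := by
  have h1 : (p + q + 2) * (p + q + 1).choose (p + 1 + r)
      = (p + q + 2).choose (p + 2 + r) * (p + 2 + r) := by
    have := Nat.add_one_mul_choose_eq (p + q + 1) (p + 1 + r)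
    rw [show p + 2 + r = p + 1 + r + 1 by ring]
    exact this
  have h2 : (p + q + 1) * (p + q).choose (p + r)
      = (p + q + 1).choose (p + 1 + r) * (p + 1 + r) := by
    have := Nat.add_one_mul_choose_eq (p + q) (p + r)
    rw [show p + 1 + r = p + r + 1 by ring]
    exact this
  have h3 : (p + q).choose (p + r) * (p + r).choose r = (p + q).choose p * q.choose r := by
    have := Nat.choose_mul (n := p + q) (k := p + r) (s := p) (by omega)
    rw [show (p + r).choose r = (p + r).choose p from (Nat.choose_symm_add).symm, this]
    congr 2 <;> omega
  have h1' : ((p : ℝ) + q + 2) * (p + q + 1).choose (p + 1 + r)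
      = (p + q + 2).choose (p + 2 + r) * (p + 2 + r) := by exact_mod_cast h1
  have h2' : ((p : ℝ) + q + 1) * (p + q).choose (p + r)
      = (p + q + 1).choose (p + 1 + r) * (p + 1 + r) := by exact_mod_cast h2
  have h3' : ((p + q).choose (p + r) : ℝ) * (p + r).choose r = (p + q).choose p * q.choose r := by
    exact_mod_cast h3
  linear_combination (-((p + r).choose r : ℝ) * (p + 1 + r)) * h1'
    - (p + q + 2) * ((p + r).choose r : ℝ) * h2' + ((p : ℝ) + q + 2) * (p + q + 1) * h3'

lemma fLk_eq (p q : ℕ) (x : ℝ) : fLk (p + q + 2) (q + 1) x =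
    ∑ r ∈ Finset.range (q + 1), ((p + q + 2).choose (p + 2 + r) : ℝ) * ((p + r).choose r : ℝ) *
      (-1 : ℝ) ^ r * x ^ (p + 2 + r) := by
  unfold fLk
  rw [← Finset.Ico_add_one_right_eq_Icc, Finset.sum_Ico_eq_sum_range]
  apply Finset.sum_congr (by simp)
  intro r _
  have e1 : p + q + 2 - (q + 1) + (1 + r) = p + 2 + r := by omega
  have e2 : p + 2 + r - 2 = p + r := by omega
  have e3 : 1 + r - 1 = r := by omega
  rw [e1, e2, e3]

lemma fLk_diag (k : ℕ) (hk : 1 ≤ k) (x : ℝ) : fLk k k x = k * x := by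
  unfold fLk
  rw [Finset.sum_eq_single 1]
  · simp
  · intro b hb hb1
    have : 1 ≤ b := (Finset.mem_Icc.1 hb).1
    rw [Nat.choose_eq_zero_of_lt (by omega : k - k + b - 2 < b - 1)]
    simp
  · intro h; exact absurd (Finset.mem_Icc.2 ⟨le_refl _, hk⟩) h

lemma fLk_contDiff (L k : ℕ) : ContDiff ℝ 1 (fLk L k) := by
  unfold fLk; fun_prop

lemma fLk_mono (L k : ℕ) (hk : 1 ≤ k) (hkL : k ≤ L) : MonotoneOn (fLk L k) (Icc 0 1) := by
  rcases eq_or_lt_of_le hkL with rfl | hlt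
  · intro x _ y _ hxy
    rw [fLk_diag _ hk, fLk_diag _ hk]; gcongr
  obtain ⟨q, rfl⟩ : ∃ q, k = q + 1 := ⟨k - 1, by omega⟩
  obtain ⟨p, rfl⟩ : ∃ p, L = p + q + 2 := ⟨L - q - 2, by omega⟩
  set a : ℕ → ℝ := fun r => ((p + q + 2).choose (p + 2 + r) : ℝ) * ((p + r).choose r : ℝ) *
      (-1 : ℝ) ^ r with ha
  set f1 : ℝ → ℝ := fun x => ∑ r ∈ Finset.range (q + 1), a r * ((p + 2 + r) * x ^ (p + 1 + r))
    with hf1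
  have hd0 : ∀ x, HasDerivAt (fLk (p + q + 2) (q + 1)) (f1 x) x := by
    intro x
    rw [show fLk (p + q + 2) (q + 1) = _ from funext (fLk_eq p q)]
    apply HasDerivAt.fun_sum
    intro r _
    have := (hasDerivAt_pow (p + 2 + r) x).const_mul (a r)
    rw [show p + 2 + r - 1 = p + 1 + r by omega] at this
    push_cast at this
    exact this
  have hd1 : ∀ x, HasDerivAt f1
      ((p + q + 2) * (p + q + 1) * ((p + q).choose p : ℝ) * x ^ p * (1 - x) ^ q) x := by
    intro x
    have h : HasDerivAt f1 (∑ r ∈ Finset.range (q + 1),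
        a r * ((p + 2 + r) * ((p + 1 + r) * x ^ (p + r)))) x := by
      apply HasDerivAt.fun_sum
      intro r _
      have := ((hasDerivAt_pow (p + 1 + r) x).const_mul ((p : ℝ) + 2 + r)).const_mul (a r)
      rw [show p + 1 + r - 1 = p + r by omega] at this
      push_cast at this
      exact this
    convert h using 1
    rw [show (1 - x) = (-x + 1) by ring, add_pow, Finset.mul_sum]
    apply Finset.sum_congr rfl
    intro r hr
    have := choose_id p q r (by have := Finset.mem_range.1 hr; omega)
    rw [neg_pow, pow_add, one_pow]
    simp only [ha]
    linear_combination (-(-1) ^ r * x ^ p * x ^ r) * this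
  have hm1 : MonotoneOn f1 (Icc 0 1) := by
    apply monotoneOn_of_hasDerivWithinAt_nonneg (convex_Icc 0 1)
      (fun x _ => (hd1 x).continuousAt.continuousWithinAt)
      (fun x _ => (hd1 x).hasDerivWithinAt)
    intro x hx
    have hx := interior_subset hx
    have h0 := hx.1
    have h1 : 0 ≤ 1 - x := by linarith [hx.2]
    positivity
  have h10 : f1 0 = 0 := by
    simp only [hf1]
    apply Finset.sum_eq_zero
    intro r _
    rw [zero_pow (by omega)]; ring
  apply monotoneOn_of_hasDerivWithinAt_nonneg (convex_Icc 0 1)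
      (fun x _ => (hd0 x).continuousAt.continuousWithinAt)
      (fun x _ => (hd0 x).hasDerivWithinAt)
  intro x hx
  have hx := interior_subset hx
  rw [← h10]
  exact hm1 (by simp) hx hx.1

lemma fLk_lip (L k : ℕ) : ∃ M : ℝ, 0 ≤ M ∧ ∀ x ∈ Icc (0 : ℝ) 1, ∀ y ∈ Icc (0 : ℝ) 1,
    |fLk L k x - fLk L k y| ≤ M * |x - y| := by
  have hc := fLk_contDiff L k
  obtain ⟨M, hM⟩ := isCompact_Icc.exists_bound_of_continuousOn (s := Icc (0 : ℝ) 1)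
    (hc.continuous_deriv le_rfl).continuousOn
  refine ⟨M, (norm_nonneg _).trans (hM 0 (by simp)), fun x hx y hy => ?_⟩
  exact (convex_Icc (0 : ℝ) 1).norm_image_sub_le_of_norm_deriv_le
    (fun z _ => (hc.differentiable one_ne_zero) z) hM hy hx

lemma unit_of_InUbar {u : ℕ → ℝ} (h : InUbar u) (j : ℕ) : u j ∈ Icc (0 : ℝ) 1 := by
  refine ⟨h.2.2 j, ?_⟩
  rw [← h.1]
  exact antitone_nat_of_succ_le h.2.1 (Nat.zero_le j)

/-- The uniqueness half. -/
lemma uniq (L k : ℕ) (lam : ℝ) (hlam : 0 < lam) (g : ℕ → ℝ) (u v : ℝ → ℕ → ℝ)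
    (hu : IsMFSol L k lam g u) (hv : IsMFSol L k lam g v) :
    ∀ t ∈ Set.Ici (0 : ℝ), ∀ j, u t j = v t j := by
  obtain ⟨M, hM0, hM⟩ := fLk_lip L k
  obtain ⟨hu0, huU, hud⟩ := hu
  obtain ⟨hv0, hvU, hvd⟩ := hv
  set K : ℝ := 2 * lam * M + 2 * k with hK
  have hK0 : 0 ≤ K := by positivity
  have key : ∀ n : ℕ, ∀ j, ∀ t ∈ Set.Ici (0 : ℝ),
      |u t j - v t j| ≤ (K * t) ^ n / (n.factorial : ℝ) := by
    intro n
    induction n with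
    | zero =>
      intro j t ht
      have h1 := unit_of_InUbar (huU t ht) j
      have h2 := unit_of_InUbar (hvU t ht) j
      simp only [pow_zero, Nat.factorial_zero, Nat.cast_one, div_one]
      rw [abs_le]; constructor <;> linarith [h1.1, h1.2, h2.1, h2.2]
    | succ n ih =>
      intro j t ht
      rcases Nat.eq_zero_or_pos j with rfl | hj
      · rw [(huU t ht).1, (hvU t ht).1]
        have : 0 ≤ K * t := mul_nonneg hK0 ht
        simp only [sub_self, abs_zero]; positivity
      have hd : ∀ s ∈ Set.Ici (0 : ℝ), HasDerivWithinAt (fun τ => u τ j - v τ j) _ (Ici 0) s :=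
        fun s hs => (hud j hj s hs).sub (hvd j hj s hs)
      have hB : ∀ s : ℝ, HasDerivAt (fun s : ℝ => (K * s) ^ (n + 1) / ((n + 1).factorial : ℝ))
          (K * ((K * s) ^ n / (n.factorial : ℝ))) s := by
        intro s
        have := ((((hasDerivAt_id s).const_mul K).pow (n + 1))).div_const ((n + 1).factorial : ℝ)
        refine HasDerivAt.congr_deriv this ?_
        rw [Nat.factorial_succ]; push_cast
        have : (n.factorial : ℝ) ≠ 0 := by positivity
        simp only [id]
        field_simp
      have := image_norm_le_of_norm_deriv_right_le_deriv_boundary (a := 0) (b := t)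
        (f := fun τ => u τ j - v τ j)
        (fun s hs => (hd s hs.1).continuousWithinAt.mono Icc_subset_Ici_self)
        (fun s hs => (hd s hs.1).mono (Ici_subset_Ici.2 hs.1))
        (by simp [hu0, hv0]) hB
        (by
          intro s hs
          have hs0 : s ∈ Ici (0 : ℝ) := hs.1
          set D := (K * s) ^ n / (n.factorial : ℝ) with hD
          have a1 := ih (j - 1) s hs0
          have a2 := ih j s hs0
          have a3 := ih (j + 1) s hs0
          have b1 := (hM _ (unit_of_InUbar (huU s hs0) (j - 1)) _
            (unit_of_InUbar (hvU s hs0) (j - 1))).trans (mul_le_mul_of_nonneg_left a1 hM0)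
          have b2 := (hM _ (unit_of_InUbar (huU s hs0) j) _
            (unit_of_InUbar (hvU s hs0) j)).trans (mul_le_mul_of_nonneg_left a2 hM0)
          have hk0 : (0 : ℝ) ≤ k := Nat.cast_nonneg k
          rw [abs_le] at a2 a3 b1 b2
          rw [Real.norm_eq_abs, abs_le]
          constructor
          · nlinarith [mul_le_mul_of_nonneg_left b1.1 hlam.le, mul_le_mul_of_nonneg_left b2.2 hlam.le,
              mul_le_mul_of_nonneg_left a2.2 hk0, mul_le_mul_of_nonneg_left a3.1 hk0]
          · nlinarith [mul_le_mul_of_nonneg_left b1.2 hlam.le, mul_le_mul_of_nonneg_left b2.1 hlam.le,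
              mul_le_mul_of_nonneg_left a2.1 hk0, mul_le_mul_of_nonneg_left a3.2 hk0])
        (x := t) ⟨ht, le_refl t⟩
      exact this
  intro t ht j
  have hlim := FloorSemiring.tendsto_pow_div_factorial_atTop (K * t)
  have := ge_of_tendsto' hlim (fun n => key n j t ht)
  exact sub_eq_zero.1 (abs_nonpos_iff.1 this)

/-- The monotone part of the vector field. -/
noncomputable def H (L k : ℕ) (lam M x y z : ℝ) : ℝ :=
  lam * fLk L k x + lam * (M * y - fLk L k y) + k * z

/-- The Picard operator (variation of constants form). -/
noncomputable def Phi (L k : ℕ) (lam M c : ℝ) (g : ℕ → ℝ) (u : ℝ → ℕ → ℝ) (t : ℝ) : ℕ → ℝ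
  | 0 => 1
  | j + 1 => Real.exp (-(c * max t 0)) * (g (j + 1) +
      ∫ s in (0 : ℝ)..(max t 0), Real.exp (c * s) *
        H L k lam M (u s j) (u s (j + 1)) (u s (j + 2)))

lemma H_mono {L k : ℕ} (hk : 1 ≤ k) (hkL : k ≤ L) {lam M : ℝ} (hlam : 0 < lam)
    (hM : ∀ x ∈ Icc (0 : ℝ) 1, ∀ y ∈ Icc (0 : ℝ) 1,
      |fLk L k x - fLk L k y| ≤ M * |x - y|)
    {x y z x' y' z' : ℝ} (hx : x ∈ Icc (0 : ℝ) 1) (hx' : x' ∈ Icc (0 : ℝ) 1)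
    (hy : y ∈ Icc (0 : ℝ) 1) (hy' : y' ∈ Icc (0 : ℝ) 1)
    (hxx : x ≤ x') (hyy : y ≤ y') (hzz : z ≤ z') :
    H L k lam M x y z ≤ H L k lam M x' y' z' := by
  have h1 := fLk_mono L k hk hkL hx hx' hxx
  have h2 := hM y' hy' y hy
  rw [abs_of_nonneg (sub_nonneg.2 hyy)] at h2
  have h3 := (abs_le.1 h2).2
  unfold H
  gcongr ?_ + ?_ + ?_
  · gcongr
  · apply mul_le_mul_of_nonneg_left _ hlam.le
    linarith
  · gcongr

lemma H_cont (L k : ℕ) (lam M : ℝ) {a b c : ℝ → ℝ} (ha : Continuous a) (hb : Continuous b)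
    (hc : Continuous c) : Continuous (fun s => H L k lam M (a s) (b s) (c s)) := by
  have := (fLk_contDiff L k).continuous
  unfold H
  fun_prop

lemma int_exp (c τ : ℝ) : ∫ s in (0 : ℝ)..τ, Real.exp (c * s) * c = Real.exp (c * τ) - 1 := by
  have : ∀ s ∈ uIcc 0 τ, HasDerivAt (fun s => Real.exp (c * s)) (Real.exp (c * s) * c) s := by
    intro s _
    simpa using ((hasDerivAt_id s).const_mul c).exp
  rw [intervalIntegral.integral_eq_sub_of_hasDerivAt this]
  · simp
  · apply Continuous.intervalIntegrable; fun_prop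

/-- Good trajectories. -/
def Good (u : ℝ → ℕ → ℝ) : Prop := (∀ t, InUbar (u t)) ∧ ∀ j, Continuous (fun t => u t j)

section
variable {L k : ℕ} {lam M c : ℝ} {g : ℕ → ℝ}

lemma integrand_cont {u : ℝ → ℕ → ℝ} (hu : ∀ j, Continuous (fun t => u t j)) (j : ℕ) :
    Continuous (fun s => Real.exp (c * s) *
        H L k lam M (u s j) (u s (j + 1)) (u s (j + 2))) := by
  have := H_cont L k lam M (hu j) (hu (j + 1)) (hu (j + 2))
  fun_prop

lemma expr_cont {w : ℝ → ℝ} (hw : ∀ a b, IntervalIntegrable w MeasureTheory.volume a b) (b : ℝ) :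
    Continuous (fun t : ℝ => Real.exp (-(c * max t 0)) * (b + ∫ s in (0 : ℝ)..(max t 0), w s)) := by
  have h1 := intervalIntegral.continuous_primitive hw 0
  have h2 : Continuous (fun t : ℝ => max t 0) := by fun_prop
  have h3 := h1.comp h2
  simp only [Function.comp_def] at h3
  fun_prop

lemma H_nonneg (hk : 1 ≤ k) (hkL : k ≤ L) (hlam : 0 < lam) (hM : ∀ x ∈ Icc (0 : ℝ) 1, ∀ y ∈ Icc (0 : ℝ) 1,
      |fLk L k x - fLk L k y| ≤ M * |x - y|)
    {x y z : ℝ} (hx : x ∈ Icc (0 : ℝ) 1) (hy : y ∈ Icc (0 : ℝ) 1) (hz : 0 ≤ z) :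
    0 ≤ H L k lam M x y z := by
  have h0 : (0 : ℝ) ∈ Icc (0 : ℝ) 1 := by simp
  have := H_mono hk hkL hlam hM h0 hx h0 hy hx.1 hy.1 hz
  refine le_trans (le_of_eq ?_) this
  unfold H; ring

lemma H_le (hk : 1 ≤ k) (hkL : k ≤ L) (hlam : 0 < lam) (hM : ∀ x ∈ Icc (0 : ℝ) 1, ∀ y ∈ Icc (0 : ℝ) 1,
      |fLk L k x - fLk L k y| ≤ M * |x - y|) (hc : c = lam * M + k)
    {x y z : ℝ} (hx : x ∈ Icc (0 : ℝ) 1) (hy : y ∈ Icc (0 : ℝ) 1) (hz : z ≤ 1) :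
    H L k lam M x y z ≤ c := by
  have h0 : (1 : ℝ) ∈ Icc (0 : ℝ) 1 := by simp
  have := H_mono hk hkL hlam hM hx h0 hy h0 hx.2 hy.2 hz
  refine le_trans this (le_of_eq ?_)
  rw [hc]; unfold H; ring

lemma Phi_mono (hk : 1 ≤ k) (hkL : k ≤ L) (hlam : 0 < lam) (hM : ∀ x ∈ Icc (0 : ℝ) 1, ∀ y ∈ Icc (0 : ℝ) 1,
      |fLk L k x - fLk L k y| ≤ M * |x - y|)
    {u v : ℝ → ℕ → ℝ} (hu : Good u) (hv : Good v) (h : ∀ t j, u t j ≤ v t j) :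
    ∀ t j, Phi L k lam M c g u t j ≤ Phi L k lam M c g v t j := by
  intro t j
  cases j with
  | zero => exact le_rfl
  | succ j =>
    simp only [Phi]
    gcongr
    apply intervalIntegral.integral_mono_on (le_max_right _ _)
      ((integrand_cont hu.2 j).intervalIntegrable _ _)
      ((integrand_cont hv.2 j).intervalIntegrable _ _)
    intro s _
    apply mul_le_mul_of_nonneg_left _ (Real.exp_pos _).le
    exact H_mono hk hkL hlam hM (unit_of_InUbar (hu.1 s) _) (unit_of_InUbar (hv.1 s) _)
      (unit_of_InUbar (hu.1 s) _) (unit_of_InUbar (hv.1 s) _) (h _ _) (h _ _) (h _ _)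

lemma Phi_good (hk : 1 ≤ k) (hkL : k ≤ L) (hlam : 0 < lam) (hM : ∀ x ∈ Icc (0 : ℝ) 1, ∀ y ∈ Icc (0 : ℝ) 1,
      |fLk L k x - fLk L k y| ≤ M * |x - y|) (hc : c = lam * M + k) (hg : InUbar g)
    {u : ℝ → ℕ → ℝ} (hu : Good u) : Good (Phi L k lam M c g u) := by
  refine ⟨fun t => ⟨rfl, ?_, ?_⟩, ?_⟩
  · intro j
    cases j with
    | zero =>
      simp only [Phi]
      have h1 : ∫ s in (0 : ℝ)..(max t 0), Real.exp (c * s) *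
          H L k lam M (u s 0) (u s (0 + 1)) (u s (0 + 2)) ≤ Real.exp (c * max t 0) - 1 := by
        rw [← int_exp]
        apply intervalIntegral.integral_mono_on (le_max_right _ _)
          ((integrand_cont hu.2 0).intervalIntegrable _ _)
          (Continuous.intervalIntegrable (by fun_prop) _ _)
        intro s _
        apply mul_le_mul_of_nonneg_left _ (Real.exp_pos _).le
        exact H_le hk hkL hlam hM hc (unit_of_InUbar (hu.1 s) _) (unit_of_InUbar (hu.1 s) _)
          (unit_of_InUbar (hu.1 s) _).2
      have h2 := (unit_of_InUbar hg (0 + 1)).2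
      calc _ ≤ Real.exp (-(c * max t 0)) * Real.exp (c * max t 0) := by
            apply mul_le_mul_of_nonneg_left _ (Real.exp_pos _).le
            linarith
        _ = 1 := by rw [← Real.exp_add]; simp
    | succ j =>
      simp only [Phi]
      have h2 := hg.2.1 (j + 1)
      apply mul_le_mul_of_nonneg_left _ (Real.exp_pos _).le
      apply add_le_add h2
      apply intervalIntegral.integral_mono_on (le_max_right _ _)
        ((integrand_cont hu.2 (j + 1)).intervalIntegrable _ _)
        ((integrand_cont hu.2 j).intervalIntegrable _ _)
      intro s _
      apply mul_le_mul_of_nonneg_left _ (Real.exp_pos _).le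
      exact H_mono hk hkL hlam hM (unit_of_InUbar (hu.1 s) _) (unit_of_InUbar (hu.1 s) _)
        (unit_of_InUbar (hu.1 s) _) (unit_of_InUbar (hu.1 s) _) ((hu.1 s).2.1 _)
        ((hu.1 s).2.1 _) ((hu.1 s).2.1 _)
  · intro j
    cases j with
    | zero => exact zero_le_one
    | succ j =>
      simp only [Phi]
      apply mul_nonneg (Real.exp_pos _).le
      apply add_nonneg (hg.2.2 _)
      apply intervalIntegral.integral_nonneg (le_max_right _ _)
      intro s _
      exact mul_nonneg (Real.exp_pos _).le (H_nonneg hk hkL hlam hM (unit_of_InUbar (hu.1 s) _)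
        (unit_of_InUbar (hu.1 s) _) ((hu.1 s).2.2 _))
  · intro j
    cases j with
    | zero => exact continuous_const
    | succ j =>
      simp only [Phi]
      exact expr_cont (fun a b => (integrand_cont hu.2 j).intervalIntegrable a b) _

lemma exists_fixed (hk : 1 ≤ k) (hkL : k ≤ L) (hlam : 0 < lam) (hM : ∀ x ∈ Icc (0 : ℝ) 1, ∀ y ∈ Icc (0 : ℝ) 1,
      |fLk L k x - fLk L k y| ≤ M * |x - y|) (hc : c = lam * M + k) (hg : InUbar g)
    : ∃ u : ℝ → ℕ → ℝ, Good u ∧ ∀ t j, u t j = Phi L k lam M c g u t j := by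
  set U : ℕ → ℝ → ℕ → ℝ := fun n => (Phi L k lam M c g)^[n] (fun _ _ => 1) with hU
  have hUs : ∀ n, U (n + 1) = Phi L k lam M c g (U n) := fun n =>
    Function.iterate_succ_apply' _ _ _
  have hgood : ∀ n, Good (U n) := by
    intro n
    induction n with
    | zero => exact ⟨fun _ => ⟨rfl, fun _ => le_rfl, fun _ => zero_le_one⟩, fun _ => continuous_const⟩
    | succ n ih => rw [hUs]; exact Phi_good hk hkL hlam hM hc hg ih
  have hanti : ∀ n t j, U (n + 1) t j ≤ U n t j := by
    intro n
    induction n with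
    | zero => intro t j; exact (unit_of_InUbar ((hgood 1).1 t) j).2
    | succ n ih =>
      rw [hUs n, hUs (n + 1)]
      exact Phi_mono hk hkL hlam hM (hgood (n + 1)) (hgood n) ih
  set u : ℝ → ℕ → ℝ := fun t j => ⨅ n, U n t j with hu
  have hlim : ∀ t j, Filter.Tendsto (fun n => U n t j) Filter.atTop (nhds (u t j)) := by
    intro t j
    apply tendsto_atTop_ciInf (antitone_nat_of_succ_le (fun n => hanti n t j))
    exact ⟨0, by rintro _ ⟨n, rfl⟩; exact ((hgood n).1 t).2.2 j⟩
  have huU : ∀ t, InUbar (u t) := by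
    intro t
    refine ⟨?_, fun j => ?_, fun j => ?_⟩
    · exact tendsto_nhds_unique (hlim t 0)
        (tendsto_const_nhds.congr (fun n => ((hgood n).1 t).1.symm))
    · exact le_of_tendsto_of_tendsto' (hlim t (j + 1)) (hlim t j) (fun n => ((hgood n).1 t).2.1 j)
    · exact ge_of_tendsto' (hlim t j) (fun n => ((hgood n).1 t).2.2 j)
  have humeas : ∀ j, Measurable (fun t => u t j) := fun j =>
    measurable_of_tendsto_metrizable (fun n => ((hgood n).2 j).measurable)
      (tendsto_pi_nhds.2 (fun t => hlim t j))
  have hbd : ∀ v : ℝ → ℕ → ℝ, (∀ t, InUbar (v t)) → ∀ j s,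
      ‖Real.exp (c * s) * H L k lam M (v s j) (v s (j + 1)) (v s (j + 2))‖
        ≤ Real.exp (c * s) * c := by
    intro v hv j s
    have h0 := H_nonneg hk hkL hlam hM (unit_of_InUbar (hv s) j) (unit_of_InUbar (hv s) (j + 1))
      (unit_of_InUbar (hv s) (j + 2)).1
    have h1 := H_le hk hkL hlam hM hc (unit_of_InUbar (hv s) j) (unit_of_InUbar (hv s) (j + 1))
      (unit_of_InUbar (hv s) (j + 2)).2
    rw [Real.norm_of_nonneg (mul_nonneg (Real.exp_pos _).le h0)]
    exact mul_le_mul_of_nonneg_left h1 (Real.exp_pos _).le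
  have hfc := (fLk_contDiff L k).continuous
  have hfix : ∀ t j, u t j = Phi L k lam M c g u t j := by
    intro t j
    cases j with
    | zero => exact (huU t).1
    | succ j =>
      have h1 := (hlim t (j + 1)).comp (Filter.tendsto_add_atTop_nat 1)
      refine tendsto_nhds_unique h1 ?_
      simp only [Function.comp_def, hUs, Phi]
      apply Filter.Tendsto.const_mul
      apply Filter.Tendsto.const_add
      apply intervalIntegral.tendsto_integral_filter_of_dominated_convergence
        (fun s => Real.exp (c * s) * c)
      · exact Filter.Eventually.of_forall (fun n =>
          (integrand_cont (hgood n).2 j).aestronglyMeasurable)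
      · exact Filter.Eventually.of_forall (fun n =>
          Filter.Eventually.of_forall (fun s _ => hbd _ (hgood n).1 j s))
      · exact Continuous.intervalIntegrable (by fun_prop) _ _
      · refine Filter.Eventually.of_forall (fun s _ => ?_)
        apply Filter.Tendsto.const_mul
        unfold H
        have a := (hfc.tendsto _).comp (hlim s j)
        have b := (hfc.tendsto _).comp (hlim s (j + 1))
        exact ((a.const_mul lam).add ((((hlim s (j + 1)).const_mul M).sub b).const_mul lam)).add
          ((hlim s (j + 2)).const_mul _)
  refine ⟨u, ⟨huU, ?_⟩, hfix⟩
  intro j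
  rw [show (fun t => u t j) = fun t => Phi L k lam M c g u t j from funext (fun t => hfix t j)]
  cases j with
  | zero => exact continuous_const
  | succ j =>
    simp only [Phi]
    apply expr_cont
    intro a b
    apply IntervalIntegrable.mono_fun
      (Continuous.intervalIntegrable (u := fun s => Real.exp (c * s) * c) (by fun_prop) a b)
    · apply Measurable.aestronglyMeasurable
      have m1 := hfc.measurable.comp (humeas j)
      have m2 := hfc.measurable.comp (humeas (j + 1))
      have m3 := humeas (j + 1)
      have m4 := humeas (j + 2)
      simp only [Function.comp_def] at m1 m2
      unfold H
      fun_prop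
    · exact Filter.Eventually.of_forall (fun s => (hbd u huU j s).trans (le_abs_self _))

lemma fixed_sol (hc : c = lam * M + k) (hg : InUbar g)
    {u : ℝ → ℕ → ℝ} (hu : Good u) (hfix : ∀ t j, u t j = Phi L k lam M c g u t j) :
    IsMFSol L k lam g u := by
  refine ⟨?_, fun t _ => hu.1 t, ?_⟩
  · intro j
    cases j with
    | zero => rw [(hu.1 0).1, hg.1]
    | succ j => rw [hfix]; simp [Phi]
  · intro j hj t ht
    obtain ⟨j, rfl⟩ : ∃ i, j = i + 1 := ⟨j - 1, by omega⟩
    have hw := integrand_cont (L := L) (k := k) (lam := lam) (M := M) (c := c) hu.2 j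
    have heq : ∀ τ ∈ Ici (0 : ℝ), u τ (j + 1) = Real.exp (-(c * τ)) * (g (j + 1) +
        ∫ s in (0 : ℝ)..τ, Real.exp (c * s) *
          H L k lam M (u s j) (u s (j + 1)) (u s (j + 2))) := by
      intro τ hτ
      rw [hfix]; simp only [Phi]; rw [max_eq_left hτ]
    have d1 := (hw.integral_hasStrictDerivAt 0 t).hasDerivAt.const_add (g (j + 1))
    have d2 : HasDerivAt (fun τ => Real.exp (-(c * τ))) (Real.exp (-(c * t)) * (-c)) t := by
      simpa using ((hasDerivAt_id t).const_mul c).neg.exp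
    have d3 := (d2.mul d1).hasDerivWithinAt (s := Ici (0 : ℝ))
    have d4 := d3.congr (f₁ := fun τ => u τ (j + 1)) heq (heq t ht)
    refine d4.congr_deriv ?_
    have e := heq t ht
    have e2 : Real.exp (-(c * t)) * Real.exp (c * t) = 1 := by
      rw [← Real.exp_add]; simp
    rw [← mul_assoc (Real.exp (-(c * t))) (Real.exp (c * t)), e2, mul_right_comm, ← e]
    simp only [H, Nat.add_sub_cancel, hc]
    ring

end

end MF

/-- Lemma 5.3 (i): for every `g ∈ Ū` there exists exactly one
`Ū`-valued solution of the mean-field ODE system with initial condition `g`. -/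
theorem mfSol_exists_unique (L k : ℕ) (hk : 1 ≤ k) (hkL : k ≤ L)
    (lam : ℝ) (hlam : 0 < lam) (g : ℕ → ℝ) (hg : InUbar g) :
    ∃ u : ℝ → ℕ → ℝ, IsMFSol L k lam g u ∧
      ∀ u' : ℝ → ℕ → ℝ, IsMFSol L k lam g u' →
        ∀ t ∈ Set.Ici (0 : ℝ), ∀ j, u' t j = u t j := by
  obtain ⟨M, _, hM⟩ := MF.fLk_lip L k
  obtain ⟨u, hu, hfix⟩ := MF.exists_fixed hk hkL hlam hM rfl hg
  have hsol := MF.fixed_sol rfl hg hu hfix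
  exact ⟨u, hsol, fun u' hu' => MF.uniq L k lam hlam g u' u hu' hsol⟩
end

section
/- Let 1 ≤ k ≤ L be integers, λ > 0, and g ∈ Ū. For each K ∈ ℕ let s^K be the solution of the truncated system on coordinates 1,…,K with s^K_{K+1}(t) = 0 for all t, initial values s^K_j(0) = g_j for j = 1,…,K, and values ordered as in Ū. Then for each fixed j ≥ 1 and t ≥ 0, the sequence K ↦ s^K_j(t) is nondecreasing in K (for K ≥ j), and its limit u_j(t) = lim_{K→∞} s^K_j(t) defines the unique Ū-valued solution u of the mean-field ODE system with initial condition g. -/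
open Finset Set Filter

/-- A solution of the truncated system on coordinates `1,…,K` with boundary value `c`. -/
def IsTruncSol (L k : ℕ) (lam : ℝ) (K : ℕ) (c : ℝ) (s : ℝ → ℕ → ℝ) : Prop :=
  (∀ t ∈ Set.Ici (0 : ℝ), s t 0 = 1) ∧
  (∀ t ∈ Set.Ici (0 : ℝ), s t (K + 1) = c) ∧
  (∀ j, 1 ≤ j → j ≤ K → ∀ t ∈ Set.Ici (0 : ℝ),
    HasDerivWithinAt (fun τ => s τ j)
      (lam * (fLk L k (s t (j - 1)) - fLk L k (s t j)) - k * (s t j - s t (j + 1)))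
      (Set.Ici (0 : ℝ)) t)

lemma fLk_mono_lip (L k : ℕ) (hk : 1 ≤ k) (hkL : k ≤ L) :
    MonotoneOn (fLk L k) (Set.Icc 0 1) := by
  obtain ⟨n, rfl⟩ : ∃ n, k = n + 1 := ⟨k - 1, by omega⟩
  obtain ⟨m, rfl⟩ : ∃ m, L = n + 1 + m := ⟨L - (n + 1), by omega⟩
  have hf : ∀ x, fLk (n + 1 + m) (n + 1) x = ∑ i ∈ Finset.range (n + 1),
      ((n + 1 + m).choose (m + 1 + i) : ℝ) * ((m + i - 1).choose i : ℝ) *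
      (-1 : ℝ) ^ i * x ^ (m + 1 + i) := by
    intro x
    unfold fLk
    rw [← Finset.Ico_succ_right_eq_Icc, Finset.sum_Ico_eq_sum_range]
    refine Finset.sum_congr (by simp) ?_
    intro i _
    have e1 : n + 1 + m - (n + 1) + (1 + i) = m + 1 + i := by omega
    have e2 : m + 1 + i - 2 = m + i - 1 := by omega
    rw [e1, e2, Nat.add_sub_cancel_left]
  rcases m with _ | p
  · have : ∀ x, fLk (n + 1 + 0) (n + 1) x = (n + 1) * x := by
      intro x
      rw [hf, Finset.sum_eq_single 0]
      · simp
      · intro i _ hi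
        rw [Nat.choose_eq_zero_of_lt (by omega : 0 + i - 1 < i)]
        simp
      · simp
    intro x _ y _ hxy
    rw [this, this]
    gcongr
  · set c : ℕ → ℝ := fun i => ((n + 1 + (p + 1)).choose (p + 2 + i) : ℝ) * ((p + i).choose i : ℝ) *
      (-1 : ℝ) ^ i with hc
    have hf' : fLk (n + 1 + (p + 1)) (n + 1) = fun x => ∑ i ∈ Finset.range (n + 1),
        c i * x ^ (p + 2 + i) := by
      funext x
      rw [hf]
      refine Finset.sum_congr rfl fun i _ => ?_
      have e2 : p + 1 + i - 1 = p + i := by omega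
      rw [e2]
    set f1 : ℝ → ℝ := fun x => ∑ i ∈ Finset.range (n + 1),
        c i * (((p + 2 + i : ℕ) : ℝ) * x ^ (p + 1 + i)) with hf1
    set f2 : ℝ → ℝ := fun x => ∑ i ∈ Finset.range (n + 1),
        c i * (((p + 2 + i : ℕ) : ℝ) * (((p + 1 + i : ℕ) : ℝ) * x ^ (p + i))) with hf2
    have d1 : ∀ x, HasDerivAt (fLk (n + 1 + (p + 1)) (n + 1)) (f1 x) x := by
      intro x
      rw [hf']
      refine HasDerivAt.fun_sum fun i _ => ?_
      have := hasDerivAt_pow (p + 2 + i) x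
      rw [show p + 2 + i - 1 = p + 1 + i by omega] at this
      exact this.const_mul _
    have d2 : ∀ x, HasDerivAt f1 (f2 x) x := by
      intro x
      refine HasDerivAt.fun_sum fun i _ => ?_
      have := hasDerivAt_pow (p + 1 + i) x
      rw [show p + 1 + i - 1 = p + i by omega] at this
      exact (this.const_mul _).const_mul _
    have key : ∀ i ∈ Finset.range (n + 1), (n + 1 + (p + 1)).choose (p + 2 + i) * ((p + i).choose i)
        * ((p + 2 + i) * (p + 1 + i)) = (p + n + 2) * (p + n + 1) * (p + n).choose p * n.choose i := by
      intro i hi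
      have hi' : i ≤ n := by simpa [Nat.lt_succ_iff] using hi
      have h1 := Nat.add_one_mul_choose_eq (p + n + 1) (p + 1 + i)
      have h2 := Nat.add_one_mul_choose_eq (p + n) (p + i)
      have h3 := Nat.choose_mul (n := p + n) (k := p + i) (s := p) (by omega)
      rw [Nat.add_sub_cancel_left, Nat.add_sub_cancel_left] at h3
      have h4 : (p + i).choose p = (p + i).choose i := by
        rw [Nat.choose_symm_add]
      rw [h4] at h3
      rw [show n + 1 + (p + 1) = p + n + 1 + 1 by ring, show p + 2 + i = p + 1 + i + 1 by ring]
      rw [show p + i + 1 = p + 1 + i by ring] at h2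
      calc _ = ((p + n + 1 + 1).choose (p + 1 + i + 1) * (p + 1 + i + 1)) * (p + 1 + i) * (p + i).choose i := by ring
        _ = (p + n + 1 + 1) * ((p + n + 1).choose (p + 1 + i) * (p + 1 + i)) * (p + i).choose i := by
          rw [← h1]; ring
        _ = (p + n + 1 + 1) * (p + n + 1) * ((p + n).choose (p + i) * (p + i).choose i) := by
          rw [← h2]; ring
        _ = _ := by rw [h3]; ring
    have f2eq : ∀ x, f2 x = ((p + n + 2) * (p + n + 1) * (p + n).choose p : ℕ) * x ^ p * (1 - x) ^ n := by
      intro x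
      rw [sub_eq_neg_add, add_pow, Finset.mul_sum]
      refine Finset.sum_congr rfl fun i hi => ?_
      have := key i hi
      have h : (((n + 1 + (p + 1)).choose (p + 2 + i) * ((p + i).choose i)
        * ((p + 2 + i) * (p + 1 + i)) : ℕ) : ℝ) = ((p + n + 2) * (p + n + 1) * (p + n).choose p * n.choose i : ℕ) := by
        rw [this]
      simp only [hc]
      push_cast at h ⊢
      rw [neg_pow x i, one_pow, pow_add]
      linear_combination ((-1) ^ i * x ^ p * x ^ i) * h
    have m1 : MonotoneOn f1 (Set.Icc 0 1) := by
      refine monotoneOn_of_deriv_nonneg (convex_Icc 0 1)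
        (fun x _ => (d2 x).continuousAt.continuousWithinAt)
        (fun x _ => (d2 x).differentiableAt.differentiableWithinAt) ?_
      intro x hx
      rw [interior_Icc] at hx
      rw [(d2 x).deriv, f2eq]
      have h0 := hx.1.le
      have h1 : 0 ≤ 1 - x := by linarith [hx.2]
      positivity
    refine monotoneOn_of_deriv_nonneg (convex_Icc 0 1)
        (fun x _ => (d1 x).continuousAt.continuousWithinAt)
        (fun x _ => (d1 x).differentiableAt.differentiableWithinAt) ?_
    intro x hx
    rw [interior_Icc] at hx
    rw [(d1 x).deriv]
    have h0 : f1 0 = 0 := by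
      simp only [hf1]
      refine Finset.sum_eq_zero fun i _ => ?_
      rw [zero_pow (by omega)]; simp
    rw [← h0]
    exact m1 (by simp) ⟨hx.1.le, hx.2.le⟩ hx.1.le

lemma fLk_contDiff (L k : ℕ) : ContDiff ℝ 1 (fLk L k) := by
  unfold fLk
  fun_prop

lemma fLk_lip (L k : ℕ) : ∃ M : ℝ, 0 ≤ M ∧ ∀ x ∈ Set.Icc (0 : ℝ) 1, ∀ y ∈ Set.Icc (0 : ℝ) 1,
    |fLk L k x - fLk L k y| ≤ M * |x - y| := by
  obtain ⟨K, hK⟩ := (fLk_contDiff L k).contDiffOn.exists_lipschitzOnWith one_ne_zero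
    (convex_Icc (0 : ℝ) 1) isCompact_Icc
  refine ⟨K, K.2, fun x hx y hy => ?_⟩
  simpa [Real.dist_eq] using hK.dist_le_mul x hx y hy

/-- Iterated comparison lemma. -/
lemma comparison (F : ℝ → ℝ) (hF : MonotoneOn F (Set.Icc 0 1)) (M : ℝ) (hM : 0 ≤ M)
    (hL : ∀ x ∈ Set.Icc (0 : ℝ) 1, ∀ y ∈ Set.Icc (0 : ℝ) 1, |F x - F y| ≤ M * |x - y|)
    (lam κ : ℝ) (hlam : 0 < lam) (hκ : 0 ≤ κ) (a b : ℝ → ℕ → ℝ) (S : Set ℕ)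
    (ha : ∀ t, 0 ≤ t → ∀ j ∈ S, a t j ∈ Set.Icc (0 : ℝ) 1)
    (hb : ∀ t, 0 ≤ t → ∀ j ∈ S, b t j ∈ Set.Icc (0 : ℝ) 1)
    (hS : ∀ j ∈ S, (∀ t, 0 ≤ t → a t j ≤ b t j) ∨
      (j - 1 ∈ S ∧ j + 1 ∈ S ∧ a 0 j ≤ b 0 j ∧
       (∀ t, 0 ≤ t → HasDerivWithinAt (fun τ => a τ j)
        (lam * (F (a t (j - 1)) - F (a t j)) - κ * (a t j - a t (j + 1))) (Set.Ici 0) t) ∧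
       (∀ t, 0 ≤ t → HasDerivWithinAt (fun τ => b τ j)
        (lam * (F (b t (j - 1)) - F (b t j)) - κ * (b t j - b t (j + 1))) (Set.Ici 0) t))) :
    ∀ t, 0 ≤ t → ∀ j ∈ S, a t j ≤ b t j := by
  intro T hT
  set C : ℝ := lam * M + κ with hC
  have hC0 : 0 ≤ C := by positivity
  set A : ℝ := Real.exp (C * T) with hA
  have key : ∀ n : ℕ, ∀ j ∈ S, ∀ t ∈ Set.Icc (0 : ℝ) T,
      Real.exp (C * t) * (a t j - b t j) ≤ A * ((2 * C * t) ^ n / n.factorial) := by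
    intro n
    induction n with
    | zero =>
      intro j hj t ht
      have h1 := (ha t ht.1 j hj).2
      have h2 := (hb t ht.1 j hj).1
      have h3 : Real.exp (C * t) ≤ A := Real.exp_le_exp.2 (by gcongr; exact ht.2)
      have h4 := Real.exp_pos (C * t)
      simp only [pow_zero, Nat.factorial_zero, Nat.cast_one, div_one, mul_one]
      nlinarith
    | succ n ih =>
      intro j hj
      rcases hS j hj with h | ⟨hm, hp, h0, hda, hdb⟩
      · intro t ht
        have h1 := h t ht.1
        have h4 := Real.exp_pos (C * t)
        have h5 : 0 ≤ A * ((2 * C * t) ^ (n + 1) / (n + 1).factorial) := by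
          have := ht.1
          positivity
        nlinarith
      have hexp : ∀ t, HasDerivAt (fun τ => Real.exp (C * τ)) (Real.exp (C * t) * C) t := by
        intro t
        simpa using ((hasDerivAt_id t).const_mul C).exp
      have hD : ∀ t, 0 ≤ t → HasDerivWithinAt (fun τ => Real.exp (C * τ) * (a τ j - b τ j))
          (Real.exp (C * t) * C * (a t j - b t j) + Real.exp (C * t) *
          ((lam * (F (a t (j - 1)) - F (a t j)) - κ * (a t j - a t (j + 1))) -
           (lam * (F (b t (j - 1)) - F (b t j)) - κ * (b t j - b t (j + 1))))) (Set.Ici 0) t :=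
        fun t ht => (hexp t).hasDerivWithinAt.mul ((hda t ht).sub (hdb t ht))
      have hB : ∀ t, HasDerivAt (fun τ : ℝ => A * ((2 * C * τ) ^ (n + 1) / (n + 1).factorial))
          (2 * C * (A * ((2 * C * t) ^ n / n.factorial))) t := by
        intro t
        have h1 : HasDerivAt (fun τ : ℝ => 2 * C * τ) (2 * C) t := by
          simpa using (hasDerivAt_id t).const_mul (2 * C)
        have h2 : HasDerivAt (fun τ : ℝ => A * ((2 * C * τ) ^ (n + 1) / (n + 1).factorial))
          (A * (((n + 1 : ℕ) : ℝ) * (2 * C * t) ^ n * (2 * C) / (n + 1).factorial)) t :=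
          ((h1.fun_pow (n + 1)).div_const ((n + 1).factorial : ℝ)).const_mul A
        have h3 : A * (((n + 1 : ℕ) : ℝ) * (2 * C * t) ^ n * (2 * C) / (n + 1).factorial)
            = 2 * C * (A * ((2 * C * t) ^ n / n.factorial)) := by
          rw [Nat.factorial_succ]
          have : (n.factorial : ℝ) ≠ 0 := by positivity
          have : (n + 1 : ℝ) ≠ 0 := by positivity
          push_cast
          field_simp
        rwa [h3] at h2
      refine image_le_of_deriv_right_le_deriv_boundary
        (fun t ht => ((hD t ht.1).continuousWithinAt).mono (fun x hx => hx.1))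
        (fun t ht => (hD t ht.1).mono (fun x hx => ht.1.trans hx)) ?_
        (fun t _ => (hB t).continuousAt.continuousWithinAt)
        (fun t _ => (hB t).hasDerivWithinAt) ?_
      · simp
        exact h0
      · intro t ht
        have htI : t ∈ Set.Icc (0 : ℝ) T := ⟨ht.1, ht.2.le⟩
        set E := Real.exp (C * t) with hE
        have hE0 : 0 < E := Real.exp_pos _
        set B := A * ((2 * C * t) ^ n / n.factorial) with hBd
        have hB0 : 0 ≤ B := by have := ht.1; positivity
        have i1 := ih (j - 1) hm t htI
        have i2 := ih j hj t htI
        have i3 := ih (j + 1) hp t htI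
        have hFb : ∀ i ∈ S, E * (a t i - b t i) ≤ B → E * (F (a t i) - F (b t i)) ≤ M * B := by
          intro i hi hBi
          rcases le_total (a t i) (b t i) with h | h
          · have h1 := hF (ha t ht.1 i hi) (hb t ht.1 i hi) h
            have h2 : 0 ≤ M * B := by positivity
            nlinarith
          · have h1 := (le_abs_self _).trans (hL _ (ha t ht.1 i hi) _ (hb t ht.1 i hi))
            rw [abs_of_nonneg (sub_nonneg.2 h)] at h1
            calc _ ≤ E * (M * (a t i - b t i)) := by gcongr
              _ = M * (E * (a t i - b t i)) := by ring
              _ ≤ _ := by gcongr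
        have hFj : E * (M * (a t j - b t j) - (F (a t j) - F (b t j))) ≤ M * B := by
          rcases le_total (a t j) (b t j) with h | h
          · have h1 := (neg_le_abs _).trans (hL _ (ha t ht.1 j hj) _ (hb t ht.1 j hj))
            rw [abs_of_nonpos (sub_nonpos.2 h)] at h1
            have h2 : 0 ≤ M * B := by positivity
            nlinarith
          · have h1 := hF (hb t ht.1 j hj) (ha t ht.1 j hj) h
            calc _ ≤ E * (M * (a t j - b t j)) := by gcongr; linarith
              _ = M * (E * (a t j - b t j)) := by ring
              _ ≤ _ := by gcongr
        have q1 := mul_le_mul_of_nonneg_left (hFb (j - 1) hm i1) hlam.le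
        have q2 := mul_le_mul_of_nonneg_left hFj hlam.le
        have q3 := mul_le_mul_of_nonneg_left i3 hκ
        have q4 : 0 ≤ κ * B := by positivity
        rw [hC]
        linarith
  intro j hj
  have hlim : Tendsto (fun n : ℕ => A * ((2 * C * T) ^ n / n.factorial)) atTop (nhds (A * 0)) :=
    (FloorSemiring.tendsto_pow_div_factorial_atTop (2 * C * T)).const_mul A
  have h := ge_of_tendsto' hlim (fun n => key n j hj T ⟨hT, le_rfl⟩)
  rw [mul_zero] at h
  have := Real.exp_pos (C * T)
  by_contra hcon
  push Not at hcon
  nlinarith [mul_pos this (sub_pos.2 hcon)]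

set_option maxHeartbeats 1000000

/-- Lemma 5.3 (ii): the solutions `s^K` of the truncated systems with
boundary value `0` and initial values `g_1,…,g_K`, ordered as in `Ū`, are nondecreasing
in `K` at each fixed coordinate `j` and time `t ≥ 0` (for `K ≥ j`), and they converge
as `K → ∞` to the unique `Ū`-valued solution of the mean-field ODE system. -/
theorem truncSol_mono_and_tendsto_mfSol (L k : ℕ) (hk : 1 ≤ k) (hkL : k ≤ L)
    (lam : ℝ) (hlam : 0 < lam) (g : ℕ → ℝ) (hg : InUbar g)
    (s : ℕ → ℝ → ℕ → ℝ)
    (hsol : ∀ K : ℕ, IsTruncSol L k lam K 0 (s K))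
    (hinit : ∀ K : ℕ, ∀ j, 1 ≤ j → j ≤ K → s K 0 j = g j)
    (hord : ∀ K : ℕ, ∀ t ∈ Set.Ici (0 : ℝ), ∀ j ≤ K, s K t (j + 1) ≤ s K t j) :
    (∀ j, 1 ≤ j → ∀ t ∈ Set.Ici (0 : ℝ), ∀ K K' : ℕ, j ≤ K → K ≤ K' →
        s K t j ≤ s K' t j) ∧
    ∃ u : ℝ → ℕ → ℝ, IsMFSol L k lam g u ∧
      (∀ j, 1 ≤ j → ∀ t ∈ Set.Ici (0 : ℝ),
        Tendsto (fun K : ℕ => s K t j) atTop (nhds (u t j))) ∧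
      (∀ u' : ℝ → ℕ → ℝ, IsMFSol L k lam g u' →
        ∀ t ∈ Set.Ici (0 : ℝ), ∀ j, u' t j = u t j) := by
  obtain ⟨M, hM, hL⟩ := fLk_lip L k
  have hF := fLk_mono_lip L k hk hkL
  have hcont : Continuous (fLk L k) := (fLk_contDiff L k).continuous
  have hκ : (0 : ℝ) ≤ k := Nat.cast_nonneg k
  -- values in the unit interval
  have hval : ∀ K t, 0 ≤ t → ∀ j ∈ {j : ℕ | j ≤ K + 1}, s K t j ∈ Set.Icc (0 : ℝ) 1 := by
    intro K t ht j hj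
    have hj : j ≤ K + 1 := hj
    constructor
    · induction hj using Nat.decreasingInduction with
      | self => rw [(hsol K).2.1 t ht]
      | of_succ i hi ih => exact (ih hi).trans (hord K t ht i (by omega))
    · induction j with
      | zero => rw [(hsol K).1 t ht]
      | succ i ih => exact (hord K t ht i (by omega)).trans (ih (by show i ≤ K + 1; omega) (by omega))
  have hmono : ∀ K K' : ℕ, K ≤ K' → ∀ t, 0 ≤ t → ∀ j ∈ {j : ℕ | j ≤ K + 1},
      s K t j ≤ s K' t j := by
    intro K K' hKK
    refine comparison (fLk L k) hF M hM hL lam k hlam hκ (s K) (s K') {j : ℕ | j ≤ K + 1}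
      (hval K) (fun t ht j hj => hval K' t ht j (show j ≤ K' + 1 from le_trans (show j ≤ K + 1 from hj) (by omega))) ?_
    intro j hj
    have hj : j ≤ K + 1 := hj
    rcases Nat.eq_zero_or_pos j with rfl | hj0
    · left
      intro t ht
      rw [(hsol K).1 t ht, (hsol K').1 t ht]
    rcases hj.eq_or_lt with rfl | hjK
    · left
      intro t ht
      rw [(hsol K).2.1 t ht]
      exact (hval K' t ht _ (show K + 1 ≤ K' + 1 by omega)).1
    · right
      refine ⟨show j - 1 ≤ K + 1 by omega, show j + 1 ≤ K + 1 by omega, ?_,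
        fun t ht => (hsol K).2.2 j hj0 (by omega) t ht,
        fun t ht => (hsol K').2.2 j hj0 (by omega) t ht⟩
      rw [hinit K j hj0 (by omega), hinit K' j hj0 (by omega)]
  refine ⟨fun j _ t ht K K' hjK hKK => hmono K K' hKK t ht j (show j ≤ K + 1 by omega), ?_⟩
  -- the pointwise limits
  have hex : ∀ t j, ∃ l, Tendsto (fun K : ℕ => s K (max t 0) j) atTop (nhds l) := by
    intro t j
    have ht : 0 ≤ max t 0 := le_max_right _ _
    have hm : Monotone (fun K : ℕ => s (K + j) (max t 0) j) := by
      intro K K' hKK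
      exact hmono (K + j) (K' + j) (by omega) _ ht j (show j ≤ K + j + 1 by omega)
    have hb : BddAbove (Set.range (fun K : ℕ => s (K + j) (max t 0) j)) := by
      refine ⟨1, ?_⟩
      rintro _ ⟨K, rfl⟩
      exact (hval (K + j) _ ht j (show j ≤ K + j + 1 by omega)).2
    exact ⟨_, (tendsto_add_atTop_iff_nat j).1 (tendsto_atTop_ciSup hm hb)⟩
  choose u hu using hex
  have humax : ∀ t : ℝ, 0 ≤ t → max t 0 = t := fun t ht => max_eq_left ht
  have hu' : ∀ t, 0 ≤ t → ∀ j, Tendsto (fun K : ℕ => s K t j) atTop (nhds (u t j)) := by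
    intro t ht j
    have := hu t j
    rwa [humax t ht] at this
  have hu0 : ∀ t, u t 0 = 1 := by
    intro t
    refine tendsto_nhds_unique (hu t 0) ?_
    refine tendsto_const_nhds.congr fun K => ?_
    rw [(hsol K).1 _ (le_max_right t 0)]
  have hub : ∀ t j, u t j ∈ Set.Icc (0 : ℝ) 1 := by
    intro t j
    refine isClosed_Icc.mem_of_tendsto (hu t j) ?_
    filter_upwards [eventually_ge_atTop j] with K hK
    exact hval K _ (le_max_right t 0) j (show j ≤ K + 1 by omega)
  have hU : ∀ t, InUbar (u t) := by
    intro t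
    refine ⟨hu0 t, fun j => ?_, fun j => (hub t j).1⟩
    refine le_of_tendsto_of_tendsto (hu t (j + 1)) (hu t j) ?_
    filter_upwards [eventually_ge_atTop j] with K hK
    exact hord K _ (le_max_right t 0) j hK
  have hui : ∀ j, u 0 j = g j := by
    intro j
    rcases Nat.eq_zero_or_pos j with rfl | hj0
    · rw [hu0, hg.1]
    refine tendsto_nhds_unique (hu' 0 le_rfl j) ?_
    refine tendsto_const_nhds.congr' ?_
    filter_upwards [eventually_ge_atTop j] with K hK
    rw [hinit K j hj0 hK]
  -- the right-hand side
  set R : ℝ → ℝ → ℝ → ℝ := fun x y z => lam * (fLk L k x - fLk L k y) - k * (y - z) with hR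
  have hRb : ∀ x ∈ Set.Icc (0 : ℝ) 1, ∀ y ∈ Set.Icc (0 : ℝ) 1, ∀ z ∈ Set.Icc (0 : ℝ) 1,
      |R x y z| ≤ lam * M + k := by
    intro x hx y hy z hz
    have h1 : |x - y| ≤ 1 := abs_sub_le_iff.2 ⟨by linarith [hx.2, hy.1], by linarith [hy.2, hx.1]⟩
    have h2 : |y - z| ≤ 1 := abs_sub_le_iff.2 ⟨by linarith [hy.2, hz.1], by linarith [hz.2, hy.1]⟩
    calc |R x y z| ≤ |lam * (fLk L k x - fLk L k y)| + |k * (y - z)| := abs_sub _ _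
      _ = lam * |fLk L k x - fLk L k y| + k * |y - z| := by
        rw [abs_mul, abs_mul, abs_of_pos hlam, abs_of_nonneg hκ]
      _ ≤ lam * (M * 1) + k * 1 := by
        gcongr
        exact (hL x hx y hy).trans (by gcongr)
      _ = _ := by ring
  have hRc : Continuous (fun p : ℝ × ℝ × ℝ => R p.1 p.2.1 p.2.2) := by
    simp only [hR]
    fun_prop
  have hC0 : 0 ≤ lam * M + k := by positivity
  have hlip : ∀ K j, j ≤ K + 1 → ∀ t ∈ Set.Ici (0 : ℝ), ∀ t' ∈ Set.Ici (0 : ℝ),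
      |s K t' j - s K t j| ≤ (lam * M + k) * |t' - t| := by
    intro K j hj t ht t' ht'
    rcases Nat.eq_zero_or_pos j with rfl | hj0
    · rw [(hsol K).1 t ht, (hsol K).1 t' ht', sub_self, abs_zero]; positivity
    rcases hj.eq_or_lt with rfl | hjK
    · rw [(hsol K).2.1 t ht, (hsol K).2.1 t' ht', sub_self, abs_zero]; positivity
    refine (convex_Ici (0 : ℝ)).norm_image_sub_le_of_norm_hasDerivWithin_le
      (f := fun τ => s K τ j) (fun x hx => (hsol K).2.2 j hj0 (by omega) x hx) ?_ ht ht'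
    intro x hx
    exact hRb _ (hval K x hx _ (show j - 1 ≤ K + 1 by omega)) _ (hval K x hx _ hj)
      _ (hval K x hx _ (show j + 1 ≤ K + 1 by omega))
  have hsc : ∀ K j, j ≤ K + 1 → Continuous (fun t => s K (max t 0) j) := by
    intro K j hj
    refine LipschitzWith.continuous (K := ⟨lam * M + k, hC0⟩) (LipschitzWith.of_dist_le_mul ?_)
    intro x y
    have h1 : |max x 0 - max y 0| ≤ |x - y| := abs_max_sub_max_le_abs x y 0
    calc _ ≤ (lam * M + k) * |max x 0 - max y 0| :=
          hlip K j hj _ (le_max_right y 0) _ (le_max_right x 0)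
      _ ≤ (lam * M + k) * |x - y| := by gcongr
      _ = _ := rfl
  have huc : ∀ j, Continuous (fun t => u t j) := by
    intro j
    refine LipschitzWith.continuous (K := ⟨lam * M + k, hC0⟩) (LipschitzWith.of_dist_le_mul ?_)
    intro x y
    have h1 : |max x 0 - max y 0| ≤ |x - y| := abs_max_sub_max_le_abs x y 0
    refine le_of_tendsto ((hu x j).sub (hu y j)).abs ?_
    filter_upwards [eventually_ge_atTop j] with K hK
    calc _ ≤ (lam * M + k) * |max x 0 - max y 0| :=
          hlip K j (by omega) _ (le_max_right y 0) _ (le_max_right x 0)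
      _ ≤ (lam * M + k) * |x - y| := by gcongr
      _ = _ := rfl
  have hIntEq : ∀ j, 1 ≤ j → ∀ t, 0 ≤ t →
      u t j = g j + ∫ τ in (0 : ℝ)..t, R (u τ (j - 1)) (u τ j) (u τ (j + 1)) := by
    intro j hj t ht
    have hI : ∀ K, j ≤ K → s K t j = g j + ∫ τ in (0 : ℝ)..t,
        R (s K (max τ 0) (j - 1)) (s K (max τ 0) j) (s K (max τ 0) (j + 1)) := by
      intro K hK
      have hc : Continuous (fun τ =>
          R (s K (max τ 0) (j - 1)) (s K (max τ 0) j) (s K (max τ 0) (j + 1))) :=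
        hRc.comp ((hsc K (j - 1) (by omega)).prodMk
          ((hsc K j (by omega)).prodMk (hsc K (j + 1) (by omega))))
      have := intervalIntegral.integral_eq_sub_of_hasDeriv_right_of_le ht
        (f := fun τ => s K τ j) (f' := fun τ =>
          R (s K (max τ 0) (j - 1)) (s K (max τ 0) j) (s K (max τ 0) (j + 1)))
        (fun x hx => ((hsol K).2.2 j hj hK x hx.1).continuousWithinAt.mono (fun y hy => hy.1))
        (fun x hx => by
          rw [humax x hx.1.le]
          exact ((hsol K).2.2 j hj hK x hx.1.le).mono (fun y hy => hx.1.le.trans (le_of_lt hy)))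
        (hc.intervalIntegrable 0 t)
      rw [this, hinit K j hj hK]
      ring
    refine tendsto_nhds_unique (hu' t ht j) ?_
    have hlim : Tendsto (fun K => ∫ τ in (0 : ℝ)..t,
        R (s (K + j) (max τ 0) (j - 1)) (s (K + j) (max τ 0) j) (s (K + j) (max τ 0) (j + 1))) atTop
        (nhds (∫ τ in (0 : ℝ)..t, R (u τ (j - 1)) (u τ j) (u τ (j + 1)))) := by
      refine intervalIntegral.tendsto_integral_filter_of_dominated_convergence
        (fun _ => lam * M + k) ?_ ?_ ?_ ?_
      · refine Eventually.of_forall fun K => Continuous.aestronglyMeasurable ?_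
        exact hRc.comp ((hsc (K + j) (j - 1) (by omega)).prodMk
          ((hsc (K + j) j (by omega)).prodMk (hsc (K + j) (j + 1) (by omega))))
      · refine Eventually.of_forall fun K => Eventually.of_forall fun τ _ => ?_
        exact hRb _ (hval _ _ (le_max_right τ 0) _ (show j - 1 ≤ K + j + 1 by omega))
          _ (hval _ _ (le_max_right τ 0) _ (show j ≤ K + j + 1 by omega))
          _ (hval _ _ (le_max_right τ 0) _ (show j + 1 ≤ K + j + 1 by omega))
      · exact intervalIntegrable_const
      · refine Eventually.of_forall fun τ _ => ?_
        have h1 := (tendsto_add_atTop_iff_nat j).2 (hu τ (j - 1))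
        have h2 := (tendsto_add_atTop_iff_nat j).2 (hu τ j)
        have h3 := (tendsto_add_atTop_iff_nat j).2 (hu τ (j + 1))
        have h4 := Tendsto.comp (hRc.tendsto (u τ (j - 1), u τ j, u τ (j + 1)))
          (h1.prodMk_nhds (h2.prodMk_nhds h3))
        simp only [Function.comp_def] at h4
        exact h4
    refine (tendsto_add_atTop_iff_nat j).1 ((hlim.const_add (g j)).congr fun K => ?_)
    rw [hI (K + j) (by omega)]
  have hMF : IsMFSol L k lam g u := by
    refine ⟨hui, fun t _ => hU t, fun j hj t ht => ?_⟩
    have hc : Continuous (fun τ => R (u τ (j - 1)) (u τ j) (u τ (j + 1))) :=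
      hRc.comp ((huc (j - 1)).prodMk ((huc j).prodMk (huc (j + 1))))
    have hd := ((hc.integral_hasStrictDerivAt 0 t).hasDerivAt.const_add (g j)).hasDerivWithinAt
      (s := Set.Ici (0 : ℝ))
    exact hd.congr (fun x hx => hIntEq j hj x hx) (hIntEq j hj t ht)
  have hle : ∀ v w : ℝ → ℕ → ℝ, IsMFSol L k lam g v → IsMFSol L k lam g w →
      ∀ t, 0 ≤ t → ∀ j ∈ (Set.univ : Set ℕ), v t j ≤ w t j := by
    intro v w hv hw
    have hI : ∀ v : ℝ → ℕ → ℝ, IsMFSol L k lam g v → ∀ t, 0 ≤ t → ∀ j ∈ (Set.univ : Set ℕ),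
        v t j ∈ Set.Icc (0 : ℝ) 1 := by
      intro v hv t ht j _
      have h := hv.2.1 t ht
      refine ⟨h.2.2 j, ?_⟩
      rw [← h.1]
      exact antitone_nat_of_succ_le h.2.1 (Nat.zero_le j)
    refine comparison (fLk L k) hF M hM hL lam k hlam hκ v w Set.univ (hI v hv) (hI w hw) ?_
    intro j _
    rcases Nat.eq_zero_or_pos j with rfl | hj0
    · left
      intro t ht
      rw [(hv.2.1 t ht).1, (hw.2.1 t ht).1]
    · right
      refine ⟨trivial, trivial, ?_, fun t ht => hv.2.2 j hj0 t ht, fun t ht => hw.2.2 j hj0 t ht⟩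
      rw [hv.1, hw.1]
  exact ⟨u, hMF, fun j _ t ht => hu' t ht j, fun u' hu2 t ht j =>
    le_antisymm (hle u' u hu2 hMF t ht j trivial) (hle u u' hMF hu2 t ht j trivial)⟩
end

section
/- Let 1 ≤ k ≤ L be integers, λ > 0, and let u be a solution of the mean-field ODE system taking values in Ū with u(0) ∈ U. Then u(t) ∈ U for all t ≥ 0, and moreover v_1(u(t)) ≤ exp(λkt)·(1 + v_1(u(0))). -/
open Finset Set

/-- Reindexed polynomial: `GP L d` is `E[(X-d)^+]`, `X ~ Bin(L,x)`. -/
noncomputable def GP (L : ℕ) : ℕ → ℝ → ℝ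
  | 0, x => L * x
  | d + 1, x => ∑ n ∈ Finset.range L,
      (L.choose (n + 2) : ℝ) * (n.choose d : ℝ) * (-1 : ℝ) ^ (n + d) * x ^ (n + 2)

lemma GP_rec (L d : ℕ) (x : ℝ) :
    GP (L + 1) (d + 1) x = (1 - x) * GP L (d + 1) x + x * GP L d x := by
  have h1 : GP (L + 1) (d + 1) x = GP L (d + 1) x +
      ∑ n ∈ Finset.range (L + 1),
        (L.choose (n + 1) : ℝ) * (n.choose d : ℝ) * (-1 : ℝ) ^ (n + d) * x ^ (n + 2) := by
    have : GP L (d + 1) x = ∑ n ∈ Finset.range (L + 1),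
      (L.choose (n + 2) : ℝ) * (n.choose d : ℝ) * (-1 : ℝ) ^ (n + d) * x ^ (n + 2) := by
      rw [Finset.sum_range_succ, Nat.choose_eq_zero_of_lt (by omega : L < L + 2)]
      simp [GP]
    rw [this, ← Finset.sum_add_distrib]
    simp only [GP]
    refine Finset.sum_congr rfl fun n _ => ?_
    rw [Nat.choose_succ_succ L (n + 1)]
    push_cast
    ring
  rw [h1, Finset.sum_range_succ']
  rcases d with _ | d
  · simp only [GP, Nat.choose_zero_right]
    have : ∑ n ∈ Finset.range L, (L.choose (n + 1 + 1) : ℝ) * ((1 : ℕ) : ℝ) *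
        (-1 : ℝ) ^ (n + 1 + 0) * x ^ (n + 1 + 2) =
        - x * ∑ n ∈ Finset.range L, (L.choose (n + 2) : ℝ) * ((1 : ℕ) : ℝ) *
        (-1 : ℝ) ^ (n + 0) * x ^ (n + 2) := by
      rw [Finset.mul_sum]
      refine Finset.sum_congr rfl fun n _ => ?_
      ring
    rw [this]
    simp
    ring
  · have : ∑ n ∈ Finset.range L, (L.choose (n + 1 + 1) : ℝ) * ((n + 1).choose (d + 1) : ℝ) *
        (-1 : ℝ) ^ (n + 1 + (d + 1)) * x ^ (n + 1 + 2) =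
        x * GP L (d + 1) x - x * GP L (d + 2) x := by
      simp only [GP]
      rw [Finset.mul_sum, Finset.mul_sum, ← Finset.sum_sub_distrib]
      refine Finset.sum_congr rfl fun n _ => ?_
      rw [Nat.choose_succ_succ n d]
      push_cast
      ring
    rw [this]
    simp
    ring

lemma GP_nonneg (L : ℕ) : ∀ d x, 0 ≤ x → x ≤ 1 → 0 ≤ GP L d x := by
  induction L with
  | zero => intro d x _ _; cases d <;> simp [GP]
  | succ L ih =>
    intro d x h0 h1
    cases d with
    | zero => simp only [GP]; positivity
    | succ d =>
      rw [GP_rec]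
      have a := ih (d + 1) x h0 h1
      have b := ih d x h0 h1
      have c : 0 ≤ 1 - x := by linarith
      positivity

lemma GP_one (d : ℕ) : ∀ k, GP (d + k) d 1 = k := by
  induction d with
  | zero => intro k; simp [GP]
  | succ d ih =>
    intro k
    rw [show d + 1 + k = (d + k) + 1 by omega, GP_rec, ih]
    ring

lemma fLk_eq_s13 (d k : ℕ) (hk : 1 ≤ k) (x : ℝ) : fLk (d + k) k x = GP (d + k) d x := by
  unfold fLk
  rw [Nat.add_sub_cancel]
  have hr : ∀ F : ℕ → ℝ, ∑ i ∈ Finset.Icc 1 k, F i = ∑ j ∈ Finset.range k, F (j + 1) := by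
    intro F
    rw [Finset.range_eq_Ico, Finset.sum_Ico_add' F 0 k 1]
    rfl
  rw [hr]
  rcases d with _ | e
  · obtain ⟨m, rfl⟩ : ∃ m, k = m + 1 := ⟨k - 1, by omega⟩
    rw [Finset.sum_range_succ', Finset.sum_eq_zero]
    · simp [GP]
    · intro j _
      rw [Nat.choose_eq_zero_of_lt (by omega : 0 + (j + 1 + 1) - 2 < j + 1 + 1 - 1)]
      simp
  · simp only [GP]
    rw [show Finset.range (e + 1 + k) = Finset.range (e + (k + 1)) by congr 1; omega,
      Finset.sum_range_add, Finset.sum_eq_zero (s := Finset.range e), zero_add, Finset.sum_range_succ,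
      Nat.choose_eq_zero_of_lt (by omega : e + 1 + k < e + k + 2)]
    · simp only [Nat.cast_zero, zero_mul, add_zero]
      refine Finset.sum_congr rfl fun j _ => ?_
      have h1 : e + 1 + (j + 1) = e + j + 2 := by omega
      rw [h1, Nat.add_sub_cancel, Nat.add_sub_cancel, Nat.choose_symm_add]
      have h2 : (-1 : ℝ) ^ (e + j + e) = (-1) ^ j := by
        rw [show e + j + e = 2 * e + j by omega, pow_add, pow_mul]; simp
      rw [h2]
    · intro n hn
      rw [Nat.choose_eq_zero_of_lt (Finset.mem_range.mp hn)]
      simp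

lemma mf_partial (L k : ℕ) (hk : 1 ≤ k) (hkL : k ≤ L)
    (lam : ℝ) (hlam : 0 < lam) (g : ℕ → ℝ) (u : ℝ → ℕ → ℝ)
    (hu : IsMFSol L k lam g u) (n : ℕ) (t : ℝ) (ht : 0 ≤ t) :
    ∑ i ∈ Finset.range n, u t (i + 1) ≤ ∑ i ∈ Finset.range n, u 0 (i + 1) + lam * k * t := by
  obtain ⟨-, hU, hd⟩ := hu
  obtain ⟨d, rfl⟩ : ∃ d, L = d + k := ⟨L - k, by omega⟩
  have hder : ∀ s ∈ Set.Ici (0 : ℝ), HasDerivWithinAt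
      (fun τ => ∑ i ∈ Finset.range n, u τ (i + 1) - lam * k * τ)
      (∑ i ∈ Finset.range n, (lam * (fLk (d + k) k (u s i) - fLk (d + k) k (u s (i + 1)))
        - k * (u s (i + 1) - u s (i + 1 + 1))) - lam * k * 1) (Set.Ici 0) s := by
    intro s hs
    refine HasDerivWithinAt.sub (HasDerivWithinAt.fun_sum fun i _ => ?_)
      ((hasDerivWithinAt_id s _).const_mul _)
    simpa using hd (i + 1) (by omega) s hs
  have hanti : AntitoneOn (fun τ => ∑ i ∈ Finset.range n, u τ (i + 1) - lam * k * τ)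
      (Set.Ici (0 : ℝ)) := by
    refine antitoneOn_of_hasDerivWithinAt_nonpos (convex_Ici 0)
      (fun s hs => (hder s hs).continuousWithinAt)
      (fun s hs => (hder s (interior_subset hs)).mono interior_subset) ?_
    intro s hs
    obtain ⟨h0, hm, hp⟩ := hU s (interior_subset hs)
    have ha : Antitone (u s) := antitone_nat_of_succ_le hm
    have e1 := Finset.sum_range_sub' (fun i => fLk (d + k) k (u s i)) n
    have e2 := Finset.sum_range_sub' (fun i => u s (i + 1)) n
    rw [Finset.sum_sub_distrib, ← Finset.mul_sum, ← Finset.mul_sum, e1, e2, h0,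
      fLk_eq_s13 d k hk, fLk_eq_s13 d k hk, GP_one]
    have p1 : 0 ≤ lam * GP (d + k) d (u s n) :=
      mul_nonneg hlam.le (GP_nonneg _ _ _ (hp n) (h0 ▸ ha (Nat.zero_le n)))
    have p2 : 0 ≤ (k : ℝ) * (u s (0 + 1) - u s (n + 1)) :=
      mul_nonneg (by positivity) (sub_nonneg.2 (ha (by omega)))
    linarith
  have := hanti (Set.mem_Ici.2 le_rfl) (Set.mem_Ici.2 ht) ht
  simp only [mul_zero, sub_zero] at this
  linarith

/-- Lemma 5.5: if a `Ū`-valued solution `u` of the mean-field ODE system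
starts in `U`, i.e. `v_1(u(0)) = ∑_{i≥1} u_i(0) < ∞`, then `u(t) ∈ U` for all `t ≥ 0` and
`v_1(u(t)) ≤ exp(λkt)·(1 + v_1(u(0)))`. -/
theorem mfSol_stays_in_U (L k : ℕ) (hk : 1 ≤ k) (hkL : k ≤ L)
    (lam : ℝ) (hlam : 0 < lam) (g : ℕ → ℝ) (u : ℝ → ℕ → ℝ)
    (hu : IsMFSol L k lam g u)
    (hg : Summable (fun i : ℕ => u 0 (i + 1))) :
    ∀ t ∈ Set.Ici (0 : ℝ), Summable (fun i : ℕ => u t (i + 1)) ∧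
      (∑' i : ℕ, u t (i + 1)) ≤ Real.exp (lam * k * t) * (1 + ∑' i : ℕ, u 0 (i + 1)) := by
  intro t ht
  have hU := hu.2.1
  have hp : ∀ n, ∑ i ∈ Finset.range n, u t (i + 1) ≤
      ∑' i : ℕ, u 0 (i + 1) + lam * k * t := fun n => by
    have h1 := mf_partial L k hk hkL lam hlam g u hu n t ht
    have h2 := hg.sum_le_tsum (Finset.range n)
      (fun i _ => (hU 0 (Set.mem_Ici.2 le_rfl)).2.2 (i + 1))
    linarith
  have hnn : ∀ i, 0 ≤ u t (i + 1) := fun i => (hU t ht).2.2 _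
  refine ⟨summable_of_sum_range_le hnn hp, (Real.tsum_le_of_sum_range_le hnn hp).trans ?_⟩
  have hv : 0 ≤ ∑' i : ℕ, u 0 (i + 1) :=
    tsum_nonneg fun i => (hU 0 (Set.mem_Ici.2 le_rfl)).2.2 _
  have ht' : (0 : ℝ) ≤ t := ht
  have hx : 0 ≤ lam * k * t := by positivity
  have he := Real.add_one_le_exp (lam * k * t)
  nlinarith [mul_nonneg hx hv]
end
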